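/- Let Q be the ground state on ℝ^N and let ρ be the unique radial Schwartz solution of L₊ρ = |x|²Q. Then there exists μ > 0 such that for every radially symmetric u ∈ H¹(ℝ^N; ℂ): (L₊ Re u, Re u)₂ + (L₋ Im u, Im u)₂ ≥ μ‖u‖_{H¹}² − (1/μ)·((Re u, Q)₂² + (Re u, |x|²Q)₂² + (Im u, ρ)₂²), where (L₊v, v)₂ = ∫(|∇v|² + v² − (1+4/N)Q^{4/N}v²)dx and (L₋v, v)₂ = ∫(|∇v|² + v² − Q^{4/N}v²)dx for real-valued v. -/

import Mathlib

open MeasureTheory Filter Complex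

noncomputable section

/-- The Laplacian `Δf = ∑ᵢ ∂ᵢ²f` on `ℝ^N`. -/
def lapl {N : ℕ} {F : Type*} [NormedAddCommGroup F] [NormedSpace ℝ F]
    (f : EuclideanSpace ℝ (Fin N) → F) (x : EuclideanSpace ℝ (Fin N)) : F :=
  ∑ i : Fin N, fderiv ℝ (fun y => fderiv ℝ f y (EuclideanSpace.single i (1:ℝ))) x
    (EuclideanSpace.single i (1:ℝ))

/-- `|∇f(x)|² = ∑ᵢ |∂ᵢf(x)|²`. -/
def gradSq {N : ℕ} {F : Type*} [NormedAddCommGroup F] [NormedSpace ℝ F]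
    (f : EuclideanSpace ℝ (Fin N) → F) (x : EuclideanSpace ℝ (Fin N)) : ℝ :=
  ∑ i : Fin N, ‖fderiv ℝ f x (EuclideanSpace.single i (1:ℝ))‖ ^ 2

/-- `Q` is the ground state: a smooth, positive, radial solution of
`ΔQ − Q + Q^{1+4/N} = 0` with exponential decay. -/
def IsGroundState (N : ℕ) (Q : EuclideanSpace ℝ (Fin N) → ℝ) : Prop :=
  ContDiff ℝ (⊤ : ℕ∞) Q ∧ (∀ x, 0 < Q x) ∧ (∀ x y, ‖x‖ = ‖y‖ → Q x = Q y) ∧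
  (∀ x, lapl Q x - Q x + Q x ^ ((1:ℝ) + 4 / N) = 0) ∧
  ∃ C c : ℝ, 0 < C ∧ 0 < c ∧ ∀ x, Q x ≤ C * Real.exp (-c * ‖x‖)

section aux

open Set Topology

lemma slt_of_deriv {f f' : ℝ → ℝ} {a b : ℝ} (hab : a < b) (hc : ContinuousOn f (Icc a b))
    (hd : ∀ x ∈ Ioo a b, HasDerivAt f (f' x) x) (hn : ∀ x ∈ Ioo a b, f' x < 0) : f b < f a := by
  obtain ⟨c, hc1, hc2⟩ := exists_hasDerivAt_eq_slope f f' hab hc hd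
  have h := hn c hc1
  rw [hc2, div_neg_iff] at h
  rcases h with h | h <;> linarith [h.1, h.2]

lemma sle_of_deriv {f f' : ℝ → ℝ} {a b : ℝ} (hab : a ≤ b) (hc : ContinuousOn f (Icc a b))
    (hd : ∀ x ∈ Ioo a b, HasDerivAt f (f' x) x) (hn : ∀ x ∈ Ioo a b, f' x ≤ 0) : f b ≤ f a := by
  rcases hab.eq_or_lt with rfl | hab
  · exact le_rfl
  obtain ⟨c, hc1, hc2⟩ := exists_hasDerivAt_eq_slope f f' hab hc hd
  have h := hn c hc1
  rw [hc2, div_le_iff₀ (by linarith)] at h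
  linarith

/-- exponent -/
def sg (d : ℕ) : ℝ := 4 / ((d : ℝ) + 1)

lemma sg_pos (d : ℕ) : 0 < sg d := by unfold sg; positivity

structure GS (d : ℕ) (q q1 : ℝ → ℝ) : Prop where
  pos : ∀ r, 0 < q r
  hq : ∀ r, HasDerivAt q (q1 r) r
  c1 : Continuous q1
  hq1 : ∀ r, 0 < r → HasDerivAt q1 (q r - q r * q r ^ sg d - d / r * q1 r) r
  z : q1 0 = 0
  dec : ∃ C c : ℝ, 0 < C ∧ 0 < c ∧ ∀ r, 0 ≤ r → q r ≤ C * Real.exp (-c * r)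

lemma hpow (d : ℕ) {r : ℝ} (hr : 0 < r) : HasDerivAt (fun r : ℝ => r ^ d) (d / r * r ^ d) r := by
  have h := hasDerivAt_pow d r
  refine h.congr_deriv ?_
  rcases d with _ | d
  · simp
  · simp only [Nat.add_sub_cancel]; field_simp; ring

namespace GS
variable {d : ℕ} {q q1 : ℝ → ℝ}

lemma cq (h : GS d q q1) : Continuous q :=
  continuous_iff_continuousAt.2 fun r => (h.hq r).continuousAt

lemma cA (h : GS d q q1) : Continuous (fun r => q r ^ sg d) :=
  h.cq.rpow_const fun r => Or.inl (h.pos r).ne'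

lemma Apos (h : GS d q q1) (r : ℝ) : 0 < q r ^ sg d := Real.rpow_pos_of_pos (h.pos r) _

lemma hA (h : GS d q q1) (r : ℝ) :
    HasDerivAt (fun r => q r ^ sg d) (sg d * q r ^ sg d * q1 r / q r) r := by
  have := (h.hq r).rpow_const (p := sg d) (Or.inl (h.pos r).ne')
  convert this using 1
  rw [Real.rpow_sub_one (h.pos r).ne']
  ring

lemma hY (h : GS d q q1) {r : ℝ} (hr : 0 < r) :
    HasDerivAt (fun r => r ^ d * q1 r) (r ^ d * (q r - q r * q r ^ sg d)) r := by
  refine ((hpow d hr).mul (h.hq1 r hr)).congr_deriv ?_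
  field_simp
  ring

lemma qto (h : GS d q q1) : Tendsto q atTop (𝓝 0) := by
  obtain ⟨C, c, hC, hc, hd⟩ := h.dec
  have h1 : Tendsto (fun r : ℝ => C * Real.exp (-c * r)) atTop (𝓝 0) := by
    have : Tendsto (fun r : ℝ => -c * r) atTop atBot :=
      tendsto_id.const_mul_atTop_of_neg (by linarith)
    simpa using (Real.tendsto_exp_atBot.comp this).const_mul C
  refine tendsto_of_tendsto_of_tendsto_of_le_of_le' tendsto_const_nhds h1
    (Eventually.of_forall fun r => (h.pos r).le) ?_
  filter_upwards [eventually_ge_atTop 0] with r hr using hd r hr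

lemma Ato (h : GS d q q1) : Tendsto (fun r => q r ^ sg d) atTop (𝓝 0) := by
  have := h.qto.rpow_const (p := sg d) (Or.inr (sg_pos d).le)
  rwa [Real.zero_rpow (sg_pos d).ne'] at this

lemma exR0 (h : GS d q q1) : ∃ R0 : ℝ, 0 < R0 ∧ (∀ r, R0 ≤ r → q r ^ sg d < 1) ∧
    (∀ r, R0 ≤ r → q1 r ≤ 0) := by
  obtain ⟨R, hR⟩ := eventually_atTop.1 (h.Ato.eventually (gt_mem_nhds one_pos))
  refine ⟨max R 1, by positivity, fun r hr => hR r (le_trans (le_max_left _ _) hr), ?_⟩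
  intro r hr
  by_contra hpos
  push Not at hpos
  have hr0 : 0 < r := lt_of_lt_of_le (by positivity) hr
  have hmono : ∀ t, r ≤ t → 0 < q1 t := by
    intro t ht
    have := sle_of_deriv (f := fun r => -(r ^ d * q1 r))
      (f' := fun r => -(r ^ d * (q r - q r * q r ^ sg d))) ht
      (by have := h.c1; fun_prop) (fun x hx => (h.hY (hr0.trans hx.1)).neg) (by
        intro x hx
        have h1 := hR x (le_trans (le_max_left _ _) (hr.trans hx.1.le))
        have h2 := h.pos x
        have : 0 < x := hr0.trans hx.1
        have h3 : 0 < q x - q x * q x ^ sg d := by nlinarith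
        have : 0 < x ^ d * (q x - q x * q x ^ sg d) := by positivity
        linarith)
    have h4 : 0 < r ^ d * q1 r := by positivity
    have h5 : 0 < t ^ d * q1 t := by linarith
    exact pos_of_mul_pos_right h5 (pow_nonneg (hr0.le.trans ht) d)
  have hq : ∀ t, r ≤ t → q r ≤ q t := by
    intro t ht
    have := sle_of_deriv (f := fun r => -(q r))
      (f' := fun r => -(q1 r)) ht
      (by have := h.cq; fun_prop) (fun x hx => (h.hq x).neg) (by
        intro x hx
        have := hmono x hx.1.le
        linarith)
    linarith
  have := ge_of_tendsto h.qto (eventually_atTop.2 ⟨r, hq⟩)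
  linarith [h.pos r]

lemma q1dec (h : GS d q q1) : ∃ C c : ℝ, 0 < C ∧ 0 < c ∧ ∀ r, 0 ≤ r →
    |q1 r| ≤ C * Real.exp (-c * r) := by
  obtain ⟨R0, hR0, hA, hn⟩ := h.exR0
  obtain ⟨C, c, hC, hc, hd⟩ := h.dec
  have key : ∀ r, R0 + 1 ≤ r → |q1 r| ≤ q (r - 1) := by
    intro r hr
    obtain ⟨x, hx, hx2⟩ := exists_hasDerivAt_eq_slope q q1 (show r - 1 < r by linarith)
      h.cq.continuousOn (fun x _ => h.hq x)
    have hxR : R0 ≤ x := by linarith [hx.1]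
    have hx0 : 0 < x := by linarith
    have := sle_of_deriv (f := fun r => -(r ^ d * q1 r))
      (f' := fun r => -(r ^ d * (q r - q r * q r ^ sg d))) hx.2.le
      (by have := h.c1; fun_prop) (fun y hy => (h.hY (hx0.trans hy.1)).neg) (by
        intro y hy
        have h1 := hA y (hxR.trans hy.1.le)
        have h2 := h.pos y
        have : 0 < y := hx0.trans hy.1
        have h3 : 0 < q y - q y * q y ^ sg d := by nlinarith
        have : 0 < y ^ d * (q y - q y * q y ^ sg d) := by positivity
        linarith)
    have e1 : r ^ d * (-q1 r) ≤ r ^ d * (-q1 x) := by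
      have : x ^ d ≤ r ^ d := pow_le_pow_left₀ hx0.le hx.2.le d
      have h2 := hn x hxR
      nlinarith
    have hrd : 0 < r ^ d := pow_pos (by linarith) d
    have e2 := le_of_mul_le_mul_left e1 hrd
    have e3 : - q1 x = q (r-1) - q r := by
      rw [hx2]; have : r - (r-1) = 1 := by ring
      rw [this]; ring
    rw [abs_of_nonpos (hn r (by linarith))]
    linarith [h.pos r]
  obtain ⟨M, hM⟩ := (isCompact_Icc (a := (0:ℝ)) (b := R0 + 1)).exists_bound_of_continuousOn
    (f := q1) h.c1.continuousOn
  refine ⟨C * Real.exp c + |M| * Real.exp (c * (R0+1)), c, by positivity, hc, ?_⟩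
  intro r hr
  rcases le_total r (R0+1) with h1 | h1
  · have a1 := hM r ⟨hr, h1⟩
    rw [Real.norm_eq_abs] at a1
    have a2 : 1 ≤ Real.exp (c * (R0+1)) * Real.exp (-c * r) := by
      rw [← Real.exp_add]; apply Real.one_le_exp; nlinarith
    have a3 : 0 ≤ C * Real.exp c * Real.exp (-c * r) := by positivity
    have a4 : |M| * 1 ≤ |M| * (Real.exp (c * (R0+1)) * Real.exp (-c * r)) :=
      mul_le_mul_of_nonneg_left a2 (abs_nonneg _)
    have := le_abs_self M
    nlinarith
  · have a1 := key r h1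
    have a2 := hd (r-1) (by linarith)
    have a3 : Real.exp (-c * (r-1)) = Real.exp c * Real.exp (-c * r) := by
      rw [← Real.exp_add]; ring_nf
    rw [a3] at a2
    have : 0 ≤ |M| * Real.exp (c * (R0+1)) * Real.exp (-c * r) := by positivity
    nlinarith

lemma exp_to {c C : ℝ} (hc : 0 < c) (k : ℕ) :
    Tendsto (fun r : ℝ => r ^ k * (C * Real.exp (-c * r))) atTop (𝓝 0) := by
  have h := (Real.tendsto_pow_mul_exp_neg_atTop_nhds_zero k).comp
    (tendsto_id.const_mul_atTop hc)
  have h2 := h.const_mul (C / c ^ k)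
  simp only [mul_zero] at h2
  refine h2.congr fun r => ?_
  simp only [Function.comp, id, mul_pow, neg_mul]
  field_simp

lemma fto {f : ℝ → ℝ} (hf : ∃ C c : ℝ, 0 < C ∧ 0 < c ∧ ∀ r, 0 ≤ r →
    |f r| ≤ C * Real.exp (-c * r)) (k : ℕ) : Tendsto (fun r : ℝ => r ^ k * f r) atTop (𝓝 0) := by
  obtain ⟨C, c, _, hc, hd⟩ := hf
  refine squeeze_zero_norm' ?_ (exp_to (C := C) hc k)
  filter_upwards [eventually_ge_atTop 0] with r hr
  rw [norm_mul, Real.norm_eq_abs, Real.norm_eq_abs, abs_of_nonneg (pow_nonneg hr k)]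
  exact mul_le_mul_of_nonneg_left (hd r hr) (pow_nonneg hr k)

lemma qdec (h : GS d q q1) : ∃ C c : ℝ, 0 < C ∧ 0 < c ∧ ∀ r, 0 ≤ r →
    |q r| ≤ C * Real.exp (-c * r) := by
  obtain ⟨C, c, hC, hc, hd⟩ := h.dec
  exact ⟨C, c, hC, hc, fun r hr => by rw [abs_of_pos (h.pos r)]; exact hd r hr⟩

/-- energy -/
lemma E_nonneg (h : GS d q q1) {r : ℝ} (hr : 0 ≤ r) :
    0 ≤ q1 r ^ 2 / 2 - q r ^ 2 / 2 + q r ^ 2 * q r ^ sg d / (sg d + 2) := by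
  have hs := sg_pos d
  set E : ℝ → ℝ := fun r => q1 r ^ 2 / 2 - q r ^ 2 / 2 + q r ^ 2 * q r ^ sg d / (sg d + 2) with hE
  have hto : Tendsto E atTop (𝓝 0) := by
    have a := fto h.q1dec 0
    simp only [pow_zero, one_mul] at a
    have := (((a.pow 2).div_const 2).sub ((h.qto.pow 2).div_const 2)).add
      (((h.qto.pow 2).mul h.Ato).div_const (sg d + 2))
    simpa [hE] using this
  have hc : Continuous E := by
    have := h.c1; have := h.cq; have := h.cA
    simp only [hE]; fun_prop
  have hle : ∀ t, r ≤ t → E t ≤ E r := by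
    intro t ht
    refine sle_of_deriv (f' := fun r => - (d / r * q1 r ^ 2)) ht hc.continuousOn ?_ ?_
    · intro x hx
      have hx0 : 0 < x := lt_of_le_of_lt hr hx.1
      have := ((((h.hq1 x hx0).pow 2).div_const 2).sub (((h.hq x).pow 2).div_const 2)).add
        ((((h.hq x).pow 2).mul (h.hA x)).div_const (sg d + 2))
      refine this.congr_deriv ?_
      have := (h.pos x).ne'
      simp only [Pi.pow_apply]
      field_simp
      ring
    · intro x hx
      have hx0 : 0 < x := lt_of_le_of_lt hr hx.1
      have : 0 ≤ d / x * q1 x ^ 2 := by positivity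
      linarith
  exact le_of_tendsto hto (eventually_atTop.2 ⟨r, hle⟩)

lemma A0 (h : GS d q q1) {r : ℝ} (hr : 0 ≤ r) (hz : q1 r = 0) : 1 < q r ^ sg d := by
  have hE := h.E_nonneg hr
  rw [hz] at hE
  have hs := sg_pos d
  have hq := h.pos r
  have : q r ^ 2 / 2 * (q r ^ sg d - 1) * (2 / (sg d + 2)) ≥ q r ^ 2 / 2 * (1 - 2 / (sg d + 2)) := by
    have e : q r ^ 2 * q r ^ sg d / (sg d + 2) = q r ^ 2 / 2 * q r ^ sg d * (2 / (sg d + 2)) := by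
      field_simp
    rw [e] at hE
    nlinarith
  have h2 : 2 / (sg d + 2) < 1 := by rw [div_lt_one (by linarith)]; linarith
  have h3 : 0 < q r ^ 2 / 2 * (1 - 2 / (sg d + 2)) := by
    have : 0 < 1 - 2 / (sg d + 2) := by linarith
    positivity
  by_contra hcon
  push Not at hcon
  have : q r ^ 2 / 2 * (q r ^ sg d - 1) * (2 / (sg d + 2)) ≤ 0 := by
    have a : 0 ≤ q r ^ 2 / 2 * (1 - q r ^ sg d) * (2 / (sg d + 2)) := by
      have : 0 ≤ 1 - q r ^ sg d := by linarith
      positivity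
    nlinarith
  linarith

lemma q1neg (h : GS d q q1) {r : ℝ} (hr : 0 < r) : q1 r < 0 := by
  have hA0 := h.A0 le_rfl h.z
  obtain ⟨δ, hδ, hδ2⟩ := Metric.eventually_nhds_iff.1 (h.cA.continuousAt.eventually (lt_mem_nhds hA0))
  have near : ∀ t, 0 < t → t < δ → q1 t < 0 := by
    intro t ht htd
    have := slt_of_deriv (f := fun r => (r ^ d * q1 r))
      (f' := fun r => (r ^ d * (q r - q r * q r ^ sg d))) ht
      (by have := h.c1; fun_prop) (fun y hy => (h.hY hy.1)) (by
        intro y hy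
        have h1 := hδ2 (y := y) (by rw [dist_zero_right, Real.norm_eq_abs, abs_of_pos hy.1]; linarith [hy.2])
        have h2 := h.pos y
        have : 0 < y := hy.1
        have h3 : 0 < q y * q y ^ sg d - q y := by nlinarith
        have : 0 < y ^ d * (q y * q y ^ sg d - q y) := by positivity
        linarith)
    simp only [h.z, mul_zero] at this
    by_contra hc
    push Not at hc
    have : 0 ≤ t ^ d * q1 t := by positivity
    linarith
  by_contra hc
  push Not at hc
  have hrd : δ ≤ r := by
    by_contra h2
    push Not at h2
    linarith [near r hr h2]
  set S := Icc (δ/2) r ∩ {t | 0 ≤ q1 t} with hS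
  have hSc : IsCompact S := isCompact_Icc.inter_right (isClosed_le continuous_const h.c1)
  obtain ⟨s, hs⟩ := hSc.exists_isLeast ⟨r, ⟨by linarith, le_rfl⟩, hc⟩
  have hs1 : δ / 2 ≤ s := hs.1.1.1
  have hs0 : 0 < s := by linarith
  have hss : δ/2 < s := by
    rcases hs1.eq_or_lt with e | e
    · have := near s hs0 (by linarith)
      have := hs.1.2
      change 0 ≤ q1 s at this
      linarith
    · exact e
  have hbefore : ∀ t ∈ Ioo (δ/2) s, q1 t < 0 := by
    intro t ht
    by_contra hcon
    push Not at hcon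
    have := hs.2 (show t ∈ S from ⟨⟨ht.1.le, ht.2.le.trans hs.1.1.2⟩, hcon⟩)
    linarith [ht.2]
  have hz : q1 s = 0 := by
    refine le_antisymm ?_ hs.1.2
    have ht : Tendsto q1 (𝓝[<] s) (𝓝 (q1 s)) := h.c1.continuousAt.tendsto.mono_left nhdsWithin_le_nhds
    refine le_of_tendsto ht ?_
    filter_upwards [Ioo_mem_nhdsLT hss] with t ht using (hbefore t ht).le
  have hA := h.A0 hs0.le hz
  have hder := h.hq1 s hs0
  rw [hz] at hder
  have hneg : q s - q s * q s ^ sg d - d / s * 0 < 0 := by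
    have := h.pos s
    nlinarith
  have hsl := (hasDerivAt_iff_tendsto_slope.1 hder).mono_left
    (nhdsWithin_mono s (show Iio s ⊆ {s}ᶜ from fun x hx => (ne_of_lt hx)))
  have : 0 ≤ q s - q s * q s ^ sg d - d / s * 0 := by
    refine ge_of_tendsto hsl ?_
    filter_upwards [Ioo_mem_nhdsLT hss] with t ht
    rw [slope_def_field, hz]
    exact div_nonneg_of_nonpos (by linarith [hbefore t ht]) (by linarith [ht.2])
  linarith

lemma qanti (h : GS d q q1) {a b : ℝ} (ha : 0 ≤ a) (hab : a < b) : q b < q a :=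
  slt_of_deriv hab h.cq.continuousOn (fun x _ => h.hq x)
    (fun x hx => h.q1neg (lt_of_le_of_lt ha hx.1))

lemma Aanti (h : GS d q q1) {a b : ℝ} (ha : 0 ≤ a) (hab : a < b) : q b ^ sg d < q a ^ sg d :=
  Real.rpow_lt_rpow (h.pos b).le (h.qanti ha hab) (sg_pos d)

/-- Pohozaev -/
lemma P_pos (h : GS d q q1) {r : ℝ} (hr : 0 < r) :
    0 < r * (q1 r ^ 2 / 2 - q r ^ 2 / 2 + q r ^ 2 * q r ^ sg d / (sg d + 2))
      + (d - 1) / 2 * q r * q1 r := by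
  have hs := sg_pos d
  set P : ℝ → ℝ := fun r => r ^ d * (r * (q1 r ^ 2 / 2 - q r ^ 2 / 2 + q r ^ 2 * q r ^ sg d / (sg d + 2)))
      + (d - 1) / 2 * q r * (r ^ d * q1 r) with hP
  have hc : Continuous P := by
    have := h.c1; have := h.cq; have := h.cA
    simp only [hP]; fun_prop
  have hder : ∀ x, 0 < x → HasDerivAt P (x ^ d * q x ^ 2 * (2 / (d + 3) * q x ^ sg d - 1)) x := by
    intro x hx
    have e := ((((h.hq1 x hx).pow 2).div_const 2).sub (((h.hq x).pow 2).div_const 2)).add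
        ((((h.hq x).pow 2).mul (h.hA x)).div_const (sg d + 2))
    have := ((hpow d hx).mul ((hasDerivAt_id x).mul e)).add
      (((h.hq x).const_mul ((d - 1 : ℝ) / 2)).mul (h.hY hx))
    refine (this.congr_deriv ?_)
    have hqx := (h.pos x).ne'
    simp only [Pi.pow_apply, Pi.mul_apply, Pi.add_apply, Pi.sub_apply, id]
    generalize q x ^ sg d = A
    have hd : (0:ℝ) < d + 1 := by positivity
    have hd3 : (0:ℝ) < d + 3 := by positivity
    have hsg : sg d + 2 = 2 * (d + 3) / (d + 1) := by unfold sg; field_simp; ring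
    rw [hsg]
    unfold sg
    field_simp
    ring
  have hto : Tendsto P atTop (𝓝 0) := by
    have a0 := fto h.q1dec 0
    have a1 := fto h.q1dec (d+1)
    have b0 := fto h.q1dec d
    have c1 := fto h.qdec (d+1)
    have := (((((a1.mul a0).div_const 2).sub ((c1.mul h.qto).div_const 2)).add
      (((c1.mul h.qto).mul h.Ato).div_const (sg d + 2)))).add ((h.qto.const_mul ((d - 1 : ℝ) / 2)).mul b0)
    simp only [mul_zero, zero_div, sub_zero, add_zero, zero_mul] at this
    refine this.congr fun x => ?_
    simp only [hP]
    ring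
  have hPr : 0 < P r := by
    rcases le_or_gt 1 (2 / (d + 3) * q r ^ sg d) with h1 | h1
    · have := slt_of_deriv (f := fun x => - P x) hr hc.neg.continuousOn (fun x hx => (hder x hx.1).neg) (by
        intro x hx
        have hx0 := hx.1
        have a1 := h.Aanti hx.1.le hx.2
        have a2 : 2 / ((d:ℝ) + 3) * q r ^ sg d < 2 / ((d:ℝ) + 3) * q x ^ sg d :=
          mul_lt_mul_of_pos_left a1 (by positivity)
        have := h.pos x
        have : 0 < x ^ d * q x ^ 2 * (2 / (d + 3) * q x ^ sg d - 1) := by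
          have : 0 < 2 / ((d:ℝ) + 3) * q x ^ sg d - 1 := by linarith
          positivity
        linarith)
      have P0 : P 0 = 0 := by simp [hP, h.z]
      simp only [P0] at this
      linarith
    · have hlt : ∀ a b, r ≤ a → a < b → P b < P a := by
        intro a b hra hab
        refine slt_of_deriv hab hc.continuousOn (fun x hx => (hder x (by linarith [hx.1]))) ?_
        intro x hx
        have hx0 : 0 < x := by linarith [hx.1]
        have a1 := h.Aanti hr.le (show r < x by linarith [hx.1])
        have a2 : 2 / ((d:ℝ) + 3) * q x ^ sg d < 2 / ((d:ℝ) + 3) * q r ^ sg d :=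
          mul_lt_mul_of_pos_left a1 (by positivity)
        have := h.pos x
        have : 0 < x ^ d * q x ^ 2 * (1 - 2 / (d + 3) * q x ^ sg d) := by
          have : 0 < 1 - 2 / ((d:ℝ) + 3) * q x ^ sg d := by linarith
          positivity
        linarith
      have h2 : 0 ≤ P (r+1) := le_of_tendsto hto (eventually_atTop.2 ⟨r+2, fun b hb =>
        (hlt (r+1) b (by linarith) (by linarith)).le⟩)
      linarith [hlt r (r+1) le_rfl (by linarith)]
  have hrd : 0 < r ^ d := by positivity
  refine pos_of_mul_pos_right (a := r ^ d) ?_ hrd.le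
  have e : P r = r ^ d * (r * (q1 r ^ 2 / 2 - q r ^ 2 / 2 + q r ^ 2 * q r ^ sg d / (sg d + 2))
      + (d - 1) / 2 * q r * q1 r) := by simp only [hP]; ring
  rwa [e] at hPr

/-- derivative of `-r q'/q` -/
lemma phi_pos (h : GS d q q1) {r : ℝ} (hr : 0 < r) :
    0 < ((d - 1) * q r * q1 r - r * q r ^ 2 * (1 - q r ^ sg d) + r * q1 r ^ 2) / q r ^ 2 := by
  have hs := sg_pos d
  have h1 := h.P_pos hr
  have h2 := h.pos r
  have h3 := h.Apos r
  apply div_pos _ (by positivity)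
  have h4 : q r ^ 2 * q r ^ sg d / (sg d + 2) ≤ q r ^ 2 * q r ^ sg d / 2 := by
    gcongr
    linarith
  have h5 := mul_le_mul_of_nonneg_left h4 hr.le
  nlinarith

lemma phi_der (h : GS d q q1) {r : ℝ} (hr : 0 < r) :
    HasDerivAt (fun r => - r * q1 r / q r)
      (((d - 1) * q r * q1 r - r * q r ^ 2 * (1 - q r ^ sg d) + r * q1 r ^ 2) / q r ^ 2) r := by
  have := (((hasDerivAt_id r).neg.mul (h.hq1 r hr)).div (h.hq r) (h.pos r).ne')
  refine this.congr_deriv ?_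
  have := (h.pos r).ne'
  simp only [Pi.mul_apply, Pi.neg_apply, id]
  field_simp
  ring

lemma cphi (h : GS d q q1) : Continuous (fun r => - r * q1 r / q r) := by
  have := h.c1; have := h.cq
  exact Continuous.div (by fun_prop) (by fun_prop) fun r => (h.pos r).ne'

lemma phi_mono (h : GS d q q1) {a b : ℝ} (ha : 0 ≤ a) (hab : a < b) :
    - a * q1 a / q a < - b * q1 b / q b := by
  have := slt_of_deriv hab h.cphi.neg.continuousOn
    (fun x hx => (h.phi_der (lt_of_le_of_lt ha hx.1)).neg)
    (fun x hx => by linarith [h.phi_pos (lt_of_le_of_lt ha hx.1)])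
  simp only [Pi.neg_apply] at this
  linarith

lemma freq (h : GS d q q1) : ∃ᶠ r in atTop, - q1 r < 3 * q r := by
  intro hcon
  simp only [not_lt] at hcon
  obtain ⟨R, hR⟩ := eventually_atTop.1 hcon
  set R1 := max R (2 * d + 1) with hR1
  have hlt : ∀ a b, R1 ≤ a → a ≤ b → q1 b + q b ≤ q1 a + q a := by
    intro a b hra hab
    have ha1 : 2 * (d:ℝ) + 1 ≤ a := le_trans (le_max_right _ _) hra
    have hd : (0:ℝ) ≤ d := by positivity
    refine sle_of_deriv (f := fun r => q1 r + q r) hab (by have := h.c1; have := h.cq; fun_prop)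
      (fun x hx => ((h.hq1 x (by linarith [hx.1])).add (h.hq x))) ?_
    intro x hx
    have hx1 : a < x := hx.1
    have a1 := hR x (by linarith [le_max_left R (2 * (d:ℝ) + 1)])
    have a2 := h.pos x
    have a3 := h.Apos x
    have a4 : d / x ≤ 1/2 := by rw [div_le_iff₀ (by linarith)]; linarith
    have a5 : d / x * (-q1 x) ≤ 1/2 * (-q1 x) := mul_le_mul_of_nonneg_right a4 (by linarith)
    have a6 := mul_pos a2 a3
    nlinarith
  have hto : Tendsto (fun r => q1 r + q r) atTop (𝓝 0) := by
    have a := fto h.q1dec 0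
    simp only [pow_zero, one_mul] at a
    simpa using a.add h.qto
  have := le_of_tendsto hto (eventually_atTop.2 ⟨R1, fun b hb => hlt R1 b le_rfl hb⟩)
  have a1 := hR R1 (le_max_left _ _)
  linarith [h.pos R1]

/-- the matching radius -/
lemma exStar (h : GS d q q1) : ∃ rs α : ℝ, 0 < rs ∧ 0 < α ∧ α = - rs * q1 rs / q rs ∧
    0 < 2 - sg d * α ∧ (2 - sg d * α) * q rs ^ sg d = 2 := by
  have hA0 := h.A0 le_rfl h.z
  have hs := sg_pos d
  set f : ℝ → ℝ := fun r => (2 - sg d * (- r * q1 r / q r)) * q r ^ sg d - 2 with hf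
  have hc : Continuous f := by
    have := h.cphi; have := h.cA
    simp only [hf]; fun_prop
  have f0 : 0 < f 0 := by simp [hf]; linarith
  obtain ⟨R, hR0, hR, hRn⟩ := h.exR0
  have fR : f R < 0 := by
    have a1 := hR R le_rfl
    have a2 : 0 ≤ - R * q1 R / q R := div_nonneg (by nlinarith [hRn R le_rfl]) (h.pos R).le
    have a3 := h.Apos R
    have a4 : 0 ≤ sg d * (- R * q1 R / q R) * q R ^ sg d := by positivity
    simp only [hf]
    nlinarith
  obtain ⟨rs, hrs, hrs2⟩ := intermediate_value_Icc' hR0.le hc.continuousOn (show (0:ℝ) ∈ Icc (f R) (f 0) from ⟨fR.le, f0.le⟩)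
  have hrs0 : 0 < rs := by
    rcases hrs.1.eq_or_lt with e | e
    · rw [← e] at hrs2; linarith
    · exact e
  have e : (2 - sg d * (- rs * q1 rs / q rs)) * q rs ^ sg d = 2 := by
    simp only [hf] at hrs2; linarith
  refine ⟨rs, _, hrs0, ?_, rfl, ?_, e⟩
  · exact div_pos (by nlinarith [h.q1neg hrs0]) (h.pos rs)
  · have a3 := h.Apos rs
    by_contra hcon
    push Not at hcon
    nlinarith

end GS

def mu (d : ℕ) : Measure ℝ :=
  (volume.restrict (Ioi (0:ℝ))).withDensity (fun r => ((Real.toNNReal (r ^ d) : NNReal) : ENNReal))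

lemma mu_meas (d : ℕ) : Measurable (fun r : ℝ => Real.toNNReal (r ^ d)) :=
  (measurable_id.pow_const d).real_toNNReal

lemma integrable_mu {d : ℕ} {f : ℝ → ℝ} :
    Integrable f (mu d) ↔ IntegrableOn (fun r => r ^ d * f r) (Ioi 0) := by
  unfold mu
  rw [integrable_withDensity_iff_integrable_smul (mu_meas d)]
  refine integrableOn_congr_fun (fun r hr => ?_) measurableSet_Ioi
  have : (0:ℝ) ≤ r ^ d := pow_nonneg (le_of_lt hr) d
  simp [NNReal.smul_def, Real.coe_toNNReal _ this]

lemma integral_mu (d : ℕ) (f : ℝ → ℝ) :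
    ∫ r, f r ∂(mu d) = ∫ r in Ioi 0, r ^ d * f r := by
  unfold mu
  rw [integral_withDensity_eq_integral_smul (mu_meas d)]
  refine setIntegral_congr_fun measurableSet_Ioi (fun r hr => ?_)
  have : (0:ℝ) ≤ r ^ d := pow_nonneg (le_of_lt hr) d
  simp [NNReal.smul_def, Real.coe_toNNReal _ this]

lemma ae_mu (d : ℕ) : ∀ᵐ r ∂(mu d), 0 < r := by
  unfold mu
  refine (withDensity_absolutelyContinuous _ _).ae_le ?_
  exact ae_restrict_mem measurableSet_Ioi

structure H1 (d : ℕ) (g g1 : ℝ → ℝ) : Prop where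
  c : Continuous g
  hd : ∀ r, 0 < r → HasDerivAt g (g1 r) r
  m0 : MemLp g 2 (mu d)
  m1 : MemLp g1 2 (mu d)

lemma memLp_mul {d : ℕ} {f g : ℝ → ℝ} (hf : MemLp f 2 (mu d)) (hg : MemLp g 2 (mu d)) :
    Integrable (fun r => f r * g r) (mu d) := hf.integrable_mul hg

lemma memExp {d : ℕ} {f : ℝ → ℝ} (hc : Continuous f) (hf : ∃ C c : ℝ, 0 < C ∧ 0 < c ∧ ∀ r, 0 ≤ r →
    |f r| ≤ C * Real.exp (-c * r)) (k : ℕ) : MemLp (fun r => r ^ k * f r) 2 (mu d) := by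
  have hc2 : Continuous (fun r => r ^ k * f r) := by fun_prop
  rw [memLp_two_iff_integrable_sq hc2.aestronglyMeasurable, integrable_mu]
  obtain ⟨C, c, hC, hc, hd⟩ := hf
  refine integrable_of_isBigO_exp_neg (b := c) hc (by fun_prop) ?_
  have ht := GS.exp_to (C := C ^ 2) hc (d + 2 * k)
  refine Asymptotics.IsBigO.of_bound 1 ?_
  filter_upwards [eventually_ge_atTop 0, ht.eventually (gt_mem_nhds one_pos)] with r hr h1
  have e1 := hd r hr
  have e2 : f r ^ 2 ≤ (C * Real.exp (-c * r)) ^ 2 := by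
    rw [← sq_abs]; exact pow_le_pow_left₀ (abs_nonneg _) e1 2
  rw [Real.norm_of_nonneg (by positivity), Real.norm_of_nonneg (by positivity), one_mul]
  calc r ^ d * (r ^ k * f r) ^ 2 = r ^ (d + 2 * k) * f r ^ 2 := by ring
    _ ≤ r ^ (d + 2 * k) * (C * Real.exp (-c * r)) ^ 2 := by gcongr
    _ = (r ^ (d + 2 * k) * (C ^ 2 * Real.exp (-c * r))) * Real.exp (-c * r) := by ring
    _ ≤ 1 * Real.exp (-c * r) := by gcongr
    _ = _ := one_mul _

/-- integration by parts -/
lemma ibp {d : ℕ} {g g1 n n1 h V : ℝ → ℝ} (hg : H1 d g g1) (hn1 : MemLp n1 2 (mu d))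
    (hc1 : Continuous n1) (hz : n1 0 = 0) (hh : MemLp h 2 (mu d))
    (hV : MemLp (fun r => V r * n r) 2 (mu d))
    (hder : ∀ r, 0 < r → HasDerivAt n1 (V r * n r - h r - d / r * n1 r) r) :
    ∫ r, (g1 r * n1 r + g r * (V r * n r)) ∂(mu d) = ∫ r, g r * h r ∂(mu d) := by
  have i1 := memLp_mul hg.m1 hn1
  have i2 := memLp_mul hg.m0 hV
  have i3 := memLp_mul hg.m0 hh
  have i4 := memLp_mul hg.m0 hn1
  have hd : ∀ r ∈ Ioi (0:ℝ), HasDerivAt (fun r => r ^ d * (g r * n1 r))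
      (r ^ d * (g1 r * n1 r + g r * (V r * n r) - g r * h r)) r := by
    intro r hr
    refine ((hpow d hr).mul ((hg.hd r hr).mul (hder r hr))).congr_deriv ?_
    have : r ≠ 0 := ne_of_gt hr
    simp only [Pi.mul_apply]
    field_simp
    ring
  have hf := integrable_mu.1 i4
  have hf' := integrable_mu.1 ((i1.add i2).sub i3)
  have ht := tendsto_zero_of_hasDerivAt_of_integrableOn_Ioi hd hf' hf
  have := integral_Ioi_of_hasDerivAt_of_tendsto (f := fun r => r ^ d * (g r * n1 r))
    (by have := hg.c; exact Continuous.continuousWithinAt (by fun_prop)) hd hf' ht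
  rw [hz] at this
  rw [← sub_eq_zero]
  refine (integral_sub (i1.add i2) i3).symm.trans ?_
  simp only [Pi.add_apply]
  rw [← integral_mu d (fun r => (g1 r * n1 r + g r * (V r * n r) - g r * h r))] at this
  simpa using this

namespace GS
variable {d : ℕ} {q q1 : ℝ → ℝ}

lemma Ale (h : GS d q q1) {r : ℝ} (hr : 0 ≤ r) : q r ^ sg d ≤ q 0 ^ sg d := by
  rcases hr.eq_or_lt with rfl | hr
  · exact le_rfl
  · exact (h.Aanti le_rfl hr).le

lemma memA (h : GS d q q1) {f : ℝ → ℝ} (hf : MemLp f 2 (mu d)) :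
    MemLp (fun r => q r ^ sg d * f r) 2 (mu d) := by
  refine MemLp.of_le_mul (c := q 0 ^ sg d) hf
    (h.cA.aestronglyMeasurable.mul hf.1) ?_
  filter_upwards [ae_mu d] with r hr
  rw [norm_mul]
  gcongr
  rw [Real.norm_of_nonneg (h.Apos r).le]
  exact h.Ale hr.le

def vv (_d : ℕ) (q q1 : ℝ → ℝ) (α : ℝ) (r : ℝ) : ℝ := α * q r + r * q1 r
def vv1 (d : ℕ) (q q1 : ℝ → ℝ) (α : ℝ) (r : ℝ) : ℝ :=
  (α + 1 - d) * q1 r + r * (q r - q r * q r ^ sg d)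

lemma cvv (h : GS d q q1) (α : ℝ) : Continuous (vv d q q1 α) := by
  have := h.cq; have := h.c1; unfold vv; fun_prop
lemma cvv1 (h : GS d q q1) (α : ℝ) : Continuous (vv1 d q q1 α) := by
  have := h.cq; have := h.c1; have := h.cA; unfold vv1; fun_prop

lemma hvv (h : GS d q q1) (α : ℝ) {r : ℝ} (hr : 0 < r) :
    HasDerivAt (vv d q q1 α) (vv1 d q q1 α r) r := by
  refine (((h.hq r).const_mul α).add ((hasDerivAt_id r).mul (h.hq1 r hr))).congr_deriv ?_
  simp only [id, vv1]
  field_simp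
  ring

lemma hvv1 (h : GS d q q1) (α : ℝ) {r : ℝ} (hr : 0 < r) :
    HasDerivAt (vv1 d q q1 α) ((1 - (1 + sg d) * q r ^ sg d) * vv d q q1 α r
      - q r * (-2 + (2 - sg d * α) * q r ^ sg d) - d / r * vv1 d q q1 α r) r := by
  refine (((h.hq1 r hr).const_mul (α + 1 - d)).add ((hasDerivAt_id r).mul
    ((h.hq r).sub ((h.hq r).mul (h.hA r))))).congr_deriv ?_
  have := (h.pos r).ne'
  simp only [id, vv1, vv, Pi.sub_apply, Pi.mul_apply]
  field_simp
  ring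

lemma H1q (h : GS d q q1) : H1 d q q1 := by
  refine ⟨h.cq, fun r _ => h.hq r, ?_, ?_⟩
  · simpa using memExp (d := d) h.cq h.qdec 0
  · simpa using memExp (d := d) h.c1 h.q1dec 0

lemma H1v (h : GS d q q1) (α : ℝ) : H1 d (vv d q q1 α) (vv1 d q q1 α) := by
  refine ⟨h.cvv α, fun r hr => h.hvv α hr, ?_, ?_⟩
  · have := (h.H1q.m0.const_mul α).add (memExp (d := d) h.c1 h.q1dec 1)
    refine this.congr_norm (h.cvv α).aestronglyMeasurable (Eventually.of_forall fun r => ?_)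
    simp [vv]
  · have e := memExp (d := d) h.cq h.qdec 1
    have := (h.H1q.m1.const_mul (α + 1 - d)).add (e.sub (h.memA e))
    refine this.congr_norm (h.cvv1 α).aestronglyMeasurable (Eventually.of_forall fun r => ?_)
    simp only [vv1, Pi.add_apply, Pi.sub_apply]
    congr 1; ring

lemma kappa (h : GS d q q1) {rs α : ℝ} (hrs : 0 < rs) (hα : 0 < α) (hαe : α = - rs * q1 rs / q rs)
    (hδ : 0 < 2 - sg d * α) (hF : (2 - sg d * α) * q rs ^ sg d = 2) :
    ∃ θ c : ℝ, 0 < θ ∧ 0 < c ∧ ∀ r, 0 < r → r ≠ rs →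
      c ≤ (-2 + (2 - sg d * α) * q r ^ sg d) / (α - (- r * q1 r / q r))
        + θ * (1 - (1 + sg d) * q r ^ sg d) := by
  have hs := sg_pos d
  set δ := 2 - sg d * α with hδdef
  set F : ℝ → ℝ := fun r => -2 + δ * q r ^ sg d with hFdef
  set m : ℝ → ℝ := fun r => α - (- r * q1 r / q r) with hm
  have hFrs : F rs = 0 := by simp only [hFdef]; linarith
  have hmrs : m rs = 0 := by simp only [hm]; linarith
  have hFd : ∀ r, HasDerivAt F (δ * (sg d * q r ^ sg d * q1 r / q r)) r := fun r =>
    (((h.hA r).const_mul δ).const_add (-2))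
  have hmd : ∀ r, 0 < r → HasDerivAt m (-(((d - 1) * q r * q1 r - r * q r ^ 2 * (1 - q r ^ sg d) + r * q1 r ^ 2) / q r ^ 2)) r :=
    fun r hr => (h.phi_der hr).const_sub α
  have cF : Continuous F := by have := h.cA; simp only [hFdef]; fun_prop
  have cm : Continuous m := by have := h.cphi; simp only [hm]; fun_prop
  have Fanti : ∀ a b, 0 ≤ a → a < b → F b < F a := by
    intro a b ha hab
    have := mul_lt_mul_of_pos_left (h.Aanti ha hab) hδ
    simp only [hFdef]; linarith
  have manti : ∀ a b, 0 ≤ a → a < b → m b < m a := by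
    intro a b ha hab
    have := h.phi_mono ha hab
    simp only [hm]; linarith
  -- R1
  obtain ⟨R, hR⟩ := eventually_atTop.1 (h.Ato.eventually (gt_mem_nhds (show (0:ℝ) < 1 / (2 * (1 + sg d)) by positivity)))
  set R1 := max R (rs + 1) with hR1
  have hR1' : ∀ r, R1 ≤ r → 1/2 ≤ 1 - (1 + sg d) * q r ^ sg d := by
    intro r hr
    have := hR r (le_trans (le_max_left _ _) hr)
    rw [lt_div_iff₀ (by positivity)] at this
    linarith
  have hrR : rs + 1 ≤ R1 := le_max_right _ _
  -- bounds on J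
  have hpJ : ∀ r ∈ Icc (rs/2) R1, 0 < r := fun r hr => by linarith [hr.1]
  have cF' : Continuous (fun r => δ * (sg d * q r ^ sg d * q1 r / q r)) := by
    have := h.cA; have := h.c1; have := h.cq
    refine continuous_const.mul (Continuous.div (by fun_prop) (by fun_prop) fun r => (h.pos r).ne')
  have cm' : Continuous (fun r => ((d - 1) * q r * q1 r - r * q r ^ 2 * (1 - q r ^ sg d) + r * q1 r ^ 2) / q r ^ 2) := by
    have := h.cA; have := h.c1; have := h.cq
    refine (Continuous.div (by fun_prop) (by fun_prop) fun r => pow_ne_zero 2 (h.pos r).ne')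
  have hJne : (Icc (rs/2) R1).Nonempty := ⟨rs, by constructor <;> linarith⟩
  obtain ⟨x0, hx0, hx0m⟩ := isCompact_Icc.exists_isMaxOn hJne cF'.continuousOn
  obtain ⟨y0, hy0, hy0m⟩ := isCompact_Icc.exists_isMaxOn hJne cm'.continuousOn
  set l := - (δ * (sg d * q x0 ^ sg d * q1 x0 / q x0)) with hl
  set M := ((d - 1) * q y0 * q1 y0 - y0 * q y0 ^ 2 * (1 - q y0 ^ sg d) + y0 * q1 y0 ^ 2) / q y0 ^ 2 with hM
  have hlpos : 0 < l := by
    have a1 := h.q1neg (hpJ x0 hx0)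
    have a2 := h.pos x0
    have a3 := h.Apos x0
    have : 0 < δ * (sg d * q x0 ^ sg d * (-q1 x0) / q x0) := by
      have : 0 < - q1 x0 := by linarith
      positivity
    rw [hl]
    have e : δ * (sg d * q x0 ^ sg d * (-q1 x0) / q x0) = - (δ * (sg d * q x0 ^ sg d * q1 x0 / q x0)) := by ring
    linarith
  have hMpos : 0 < M := h.phi_pos (hpJ y0 hy0)
  set c1 := l / M with hc1
  have hc1pos : 0 < c1 := by positivity
  have hJ : ∀ a b, a ∈ Icc (rs/2) R1 → b ∈ Icc (rs/2) R1 → a ≤ b → F b - c1 * m b ≤ F a - c1 * m a := by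
    intro a b ha hb hab
    refine sle_of_deriv (f := fun r => F r - c1 * m r) hab (by fun_prop)
      (fun x hx => (hFd x).sub ((hmd x (by linarith [hx.1, hpJ a ha])).const_mul c1)) ?_
    intro x hx
    have hxJ : x ∈ Icc (rs/2) R1 := ⟨ha.1.trans hx.1.le, hx.2.le.trans hb.2⟩
    have a1 := hx0m hxJ
    have a2 := hy0m hxJ
    change _ ≤ δ * (sg d * q x0 ^ sg d * q1 x0 / q x0) at a1
    change _ ≤ M at a2
    have a3 := mul_le_mul_of_nonneg_left a2 hc1pos.le
    have a4 : c1 * M = l := by rw [hc1]; field_simp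
    linarith
  set F2 := F (rs/2) with hF2
  have hF2pos : 0 < F2 := by have := Fanti (rs/2) rs (by linarith) (by linarith); linarith
  set c2 := min c1 (F2 / α) with hc2
  have hc2pos : 0 < c2 := by positivity
  have kap : ∀ r, 0 < r → r ≠ rs → r ≤ R1 → c2 ≤ F r / m r := by
    intro r hr hne hrR1
    rcases lt_or_ge r (rs/2) with h1 | h1
    · refine (min_le_right _ _).trans ?_
      have a1 := Fanti r (rs/2) hr.le h1
      have a2 := manti r rs hr.le (by linarith)
      have a3 : m r ≤ α := by
        have : 0 ≤ - r * q1 r / q r := div_nonneg (by nlinarith [h.q1neg hr]) (h.pos r).le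
        simp only [hm]; linarith
      rw [hmrs] at a2
      have : 0 ≤ F r := by linarith
      gcongr
    · refine (min_le_left _ _).trans ?_
      have hrJ : r ∈ Icc (rs/2) R1 := ⟨h1, hrR1⟩
      have hsJ : rs ∈ Icc (rs/2) R1 := by constructor <;> linarith
      rcases lt_or_gt_of_ne hne with h2 | h2
      · have a1 := hJ r rs hrJ hsJ h2.le
        have a2 := manti r rs hr.le h2
        rw [hmrs] at a2
        rw [hmrs, hFrs] at a1
        rw [le_div_iff₀ a2]; linarith
      · have a1 := hJ rs r hsJ hrJ h2.le
        have a2 := manti rs r hrs.le h2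
        rw [hmrs] at a2
        rw [hmrs, hFrs] at a1
        rw [le_div_iff_of_neg a2]; linarith
  have hA0 := h.Apos 0
  set θ := c2 / (2 * (1 + sg d) * q 0 ^ sg d) with hθ
  have hθpos : 0 < θ := by positivity
  refine ⟨θ, min (c2/2) (θ/2), hθpos, by positivity, ?_⟩
  intro r hr hne
  change _ ≤ F r / m r + _
  rcases le_total r R1 with h1 | h1
  · refine (min_le_left _ _).trans ?_
    have a1 := kap r hr hne h1
    have a2 := h.Ale hr.le
    have a3 : θ * ((1 + sg d) * q r ^ sg d) ≤ θ * ((1 + sg d) * q 0 ^ sg d) := by gcongr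
    have a4 : θ * ((1 + sg d) * q 0 ^ sg d) = c2 / 2 := by rw [hθ]; field_simp
    nlinarith
  · refine (min_le_right _ _).trans ?_
    have a1 := hR1' r h1
    have a2 := manti rs r hrs.le (by linarith)
    have a3 := Fanti rs r hrs.le (by linarith)
    rw [hmrs] at a2
    rw [hFrs] at a3
    have a4 : 0 ≤ F r / m r := (div_pos_of_neg_of_neg a3 a2).le
    have a5 := mul_le_mul_of_nonneg_left a1 hθpos.le
    linarith

end GS

namespace GS
variable {d : ℕ} {q q1 : ℝ → ℝ}

lemma coerK (h : GS d q q1) : ∃ rs c : ℝ, 0 < rs ∧ 0 < c ∧ ∀ g g1, H1 d g g1 → g rs = 0 →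
    c * ∫ r, g r ^ 2 ∂(mu d) ≤
      ∫ r, (g1 r ^ 2 + (1 - (1 + sg d) * q r ^ sg d) * g r ^ 2) ∂(mu d) := by
  obtain ⟨rs, α, hrs, hα, hαe, hδ, hF⟩ := h.exStar
  obtain ⟨θ, c, hθ, hc, hk⟩ := h.kappa hrs hα hαe hδ hF
  refine ⟨rs, c / (1 + θ), hrs, by positivity, ?_⟩
  intro g g1 hg hgz
  set v := vv d q q1 α with hv
  set v1 := vv1 d q q1 α with hv1
  have hvm : ∀ r, v r = q r * (α - (- r * q1 r / q r)) := by
    intro r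
    have := (h.pos r).ne'
    simp only [hv, vv]; field_simp; ring
  have hvrs : v rs = 0 := by rw [hvm, ← hαe]; ring
  have mlt : ∀ r, rs < r → α - (- r * q1 r / q r) < 0 := fun r hr => by
    have := h.phi_mono hrs.le hr
    rw [← hαe] at this; linarith
  have mgt : ∀ r, 0 ≤ r → r < rs → 0 < α - (- r * q1 r / q r) := fun r h0 hr => by
    have := h.phi_mono h0 hr
    rw [← hαe] at this; linarith
  have hvne : ∀ r, 0 ≤ r → r ≠ rs → v r ≠ 0 := by
    intro r h0 hne
    rw [hvm]
    refine mul_ne_zero (h.pos r).ne' ?_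
    rcases lt_or_gt_of_ne hne with h1 | h1
    · exact (mgt r h0 h1).ne'
    · exact (mlt r h1).ne
  -- relation between v1 and phi'
  have hv1m : ∀ r, 0 < r → v1 r = q1 r * (α - (- r * q1 r / q r)) - q r *
      (((d - 1) * q r * q1 r - r * q r ^ 2 * (1 - q r ^ sg d) + r * q1 r ^ 2) / q r ^ 2) := by
    intro r hr
    have := (h.pos r).ne'
    simp only [hv1, vv1]; field_simp; ring
  have hv1rs : v1 rs ≠ 0 := by
    rw [hv1m rs hrs, ← hαe]
    have := mul_pos (h.pos rs) (h.phi_pos hrs)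
    rw [sub_self, mul_zero, zero_sub]
    linarith
  set Φ : ℝ → ℝ := fun r => r ^ d * (v1 r / v r * g r ^ 2) with hΦ
  have hΦd : ∀ r, 0 < r → r ≠ rs → HasDerivAt Φ (r ^ d * (2 * (v1 r / v r) * g r * g1 r
      - (v1 r / v r) ^ 2 * g r ^ 2 + (1 - (1 + sg d) * q r ^ sg d) * g r ^ 2
      - (-2 + (2 - sg d * α) * q r ^ sg d) / (α - (- r * q1 r / q r)) * g r ^ 2)) r := by
    intro r hr hne
    have hvr := hvne r hr.le hne
    refine ((hpow d hr).mul (((h.hvv1 α hr).div (h.hvv α hr) hvr).mul ((hg.hd r hr).pow 2))).congr_deriv ?_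
    have e : (-2 + (2 - sg d * α) * q r ^ sg d) / (α - (- r * q1 r / q r)) =
        q r * (-2 + (2 - sg d * α) * q r ^ sg d) / v r := by
      rw [hvm, mul_div_mul_left _ _ (h.pos r).ne']
    rw [e]
    simp only [Pi.mul_apply, Pi.pow_apply, Pi.div_apply, ← hv, ← hv1]
    field_simp
    ring
  set ψ : ℝ → ℝ := fun r => r ^ d * ((1 + θ) * (g1 r ^ 2 + (1 - (1 + sg d) * q r ^ sg d) * g r ^ 2)
    - c * g r ^ 2) with hψ
  have hle : ∀ r, 0 < r → r ≠ rs → r ^ d * (2 * (v1 r / v r) * g r * g1 r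
      - (v1 r / v r) ^ 2 * g r ^ 2 + (1 - (1 + sg d) * q r ^ sg d) * g r ^ 2
      - (-2 + (2 - sg d * α) * q r ^ sg d) / (α - (- r * q1 r / q r)) * g r ^ 2) ≤ ψ r := by
    intro r hr hne
    simp only [hψ]
    refine mul_le_mul_of_nonneg_left ?_ (by positivity)
    have a1 := mul_le_mul_of_nonneg_right (hk r hr hne) (sq_nonneg (g r))
    have a2 := sq_nonneg (g1 r - v1 r / v r * g r)
    have a3 := mul_nonneg hθ.le (sq_nonneg (g1 r))
    nlinarith
  -- continuity
  have cv := h.cvv α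
  have cv1 := h.cvv1 α
  have cg := hg.c
  have hΦc : ∀ r, 0 ≤ r → ContinuousAt Φ r := by
    intro r hr
    by_cases hne : r = rs
    · subst hne
      have hs1 := hasDerivAt_iff_tendsto_slope.1 (hg.hd r hrs)
      have hs2 := hasDerivAt_iff_tendsto_slope.1 (h.hvv α hrs)
      have t1 : Tendsto (fun x => x ^ d * v1 x * g x * (slope g r x / slope v r x)) (𝓝[≠] r)
          (𝓝 (r ^ d * v1 r * g r * (g1 r / v1 r))) := by
        refine Tendsto.mul ?_ (hs1.div hs2 hv1rs)
        refine Tendsto.mono_left (Continuous.tendsto (f := fun x => x ^ d * v1 x * g x) ?_ r) nhdsWithin_le_nhds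
        fun_prop
      rw [hgz, mul_zero, zero_mul] at t1
      have t2 : Tendsto Φ (𝓝[≠] r) (𝓝 0) := by
        refine t1.congr' ?_
        filter_upwards [self_mem_nhdsWithin, mem_nhdsWithin_of_mem_nhds (lt_mem_nhds hrs)] with x hx hx0
        have hxv := hvne x (le_of_lt hx0) hx
        have hxr : x - r ≠ 0 := sub_ne_zero.2 hx
        rw [slope_def_field, slope_def_field, hgz, hvrs]
        simp only [hΦ, sub_zero]
        field_simp
      have e0 : Φ r = 0 := by simp [hΦ, hgz]
      rw [continuousAt_iff_punctured_nhds, e0]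
      exact t2
    · have hvr := hvne r hr hne
      have : ContinuousAt (fun r => v1 r / v r) r := cv1.continuousAt.div cv.continuousAt hvr
      exact ((continuous_pow d).continuousAt).mul (this.mul (cg.pow 2).continuousAt)
  have Φ0 : Φ 0 = 0 := by simp [hΦ, hv1, vv1, h.z]
  have Φrs : Φ rs = 0 := by simp [hΦ, hgz]
  -- integrability
  have i0 : Integrable (fun r => g r ^ 2) (mu d) := hg.m0.integrable_sq
  have i1 : Integrable (fun r => g1 r ^ 2) (mu d) := hg.m1.integrable_sq
  have i2 : Integrable (fun r => (1 - (1 + sg d) * q r ^ sg d) * g r ^ 2) (mu d) := by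
    have := i0.sub ((memLp_mul (h.memA hg.m0) hg.m0).const_mul (1 + sg d))
    refine this.congr (Eventually.of_forall fun r => ?_)
    simp only [Pi.sub_apply]; ring
  have i3 : Integrable (fun r => (1 + θ) * (g1 r ^ 2 + (1 - (1 + sg d) * q r ^ sg d) * g r ^ 2)
    - c * g r ^ 2) (mu d) := ((i1.add i2).const_mul _).sub (i0.const_mul _)
  have iψ : IntegrableOn ψ (Ioi 0) := integrable_mu.1 i3
  have iIcc : ∀ a b, 0 ≤ a → IntegrableOn ψ (Icc a b) := by
    intro a b ha
    rw [integrableOn_Icc_iff_integrableOn_Ioc]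
    exact iψ.mono_set fun x hx => lt_of_le_of_lt ha hx.1
  have hint : ∀ R, rs < R → Φ R ≤ ∫ r in (0:ℝ)..R, ψ r := by
    intro R hR
    have s1 := intervalIntegral.sub_le_integral_of_hasDeriv_right_of_le hrs.le
      (fun x hx => (hΦc x hx.1).continuousWithinAt)
      (fun x hx => (hΦd x hx.1 hx.2.ne).hasDerivWithinAt) (iIcc 0 rs le_rfl)
      (fun x hx => hle x hx.1 hx.2.ne)
    have s2 := intervalIntegral.sub_le_integral_of_hasDeriv_right_of_le hR.le
      (fun x hx => (hΦc x (hrs.le.trans hx.1)).continuousWithinAt)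
      (fun x hx => (hΦd x (hrs.trans hx.1) hx.1.ne').hasDerivWithinAt) (iIcc rs R hrs.le)
      (fun x hx => hle x (hrs.trans hx.1) hx.1.ne')
    have s3 := intervalIntegral.integral_add_adjacent_intervals (μ := volume) (f := ψ) (a := 0) (b := rs) (c := R)
      ((intervalIntegrable_iff_integrableOn_Icc_of_le hrs.le).2 (iIcc 0 rs le_rfl))
      ((intervalIntegrable_iff_integrableOn_Icc_of_le hR.le).2 (iIcc rs R hrs.le))
    rw [← s3]
    linarith
  have hlim := intervalIntegral_tendsto_integral_Ioi 0 iψ tendsto_id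
  -- decay of r^d g^2
  have hdec : Tendsto (fun r => r ^ d * g r ^ 2) atTop (𝓝 0) := by
    have j0 := (integrable_mu.1 i0).mono_set (Ioi_subset_Ioi (zero_le_one (α := ℝ)))
    have j1 := (integrable_mu.1 ((memLp_mul hg.m0 hg.m1).const_mul 2)).mono_set (Ioi_subset_Ioi (zero_le_one (α := ℝ)))
    have j2 : IntegrableOn (fun r => d / r * (r ^ d * g r ^ 2)) (Ioi 1) := by
      refine Integrable.mono' (j0.const_mul (d:ℝ)) ?_ ?_
      · refine ContinuousOn.aestronglyMeasurable ?_ measurableSet_Ioi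
        refine ContinuousOn.mul (ContinuousOn.div continuousOn_const continuousOn_id ?_) (by fun_prop)
        intro x hx; exact (lt_trans one_pos hx).ne'
      · filter_upwards [ae_restrict_mem measurableSet_Ioi] with r hr
        have hr1 : (1:ℝ) < r := hr
        have hr0 : 0 < r := by linarith
        rw [Real.norm_of_nonneg (by positivity)]
        gcongr
        exact div_le_self (by positivity) hr1.le
    refine tendsto_zero_of_hasDerivAt_of_integrableOn_Ioi (a := 1) (fun x hx => ?_) (j2.add j1) j0
    have hx0 : 0 < x := lt_trans one_pos hx
    refine ((hpow d hx0).mul ((hg.hd x hx0).pow 2)).congr_deriv ?_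
    simp only [Pi.pow_apply, Pi.add_apply]
    have := hx0.ne'
    push_cast
    field_simp
  have hfin : 0 ≤ ∫ r in Ioi 0, ψ r := by
    by_contra hcon
    push Not at hcon
    set L := ∫ r in Ioi 0, ψ r with hL
    have e1 := hlim.eventually (gt_mem_nhds (show L < L / 2 by linarith))
    have e2 := hdec.eventually (gt_mem_nhds (show 0 < - L / 6 by linarith))
    obtain ⟨R, hR, hR1, hR2, hR3⟩ := (h.freq.and_eventually (e1.and (e2.and (eventually_gt_atTop rs)))).exists
    have hR0 : 0 < R := hrs.trans hR3
    have a1 := hint R hR3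
    have a2 : -3 ≤ v1 R / v R := by
      rw [hv1m R hR0, hvm R]
      have b1 := h.pos R
      have b2 := mlt R hR3
      have b3 := h.phi_pos hR0
      rw [le_div_iff_of_neg (mul_neg_of_pos_of_neg b1 b2)]
      have b4 : q1 R * (α - -R * q1 R / q R) ≤ -3 * (q R * (α - -R * q1 R / q R)) := by
        nlinarith
      have b5 := mul_pos b1 b3
      linarith
    have a3 : -3 * (R ^ d * g R ^ 2) ≤ Φ R := by
      have : 0 ≤ R ^ d * g R ^ 2 := by positivity
      calc -3 * (R ^ d * g R ^ 2) ≤ v1 R / v R * (R ^ d * g R ^ 2) := mul_le_mul_of_nonneg_right a2 this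
        _ = Φ R := by simp only [hΦ]; ring
    simp only [id] at hR1
    linarith
  have hfin2 : 0 ≤ ∫ r, ((1 + θ) * (g1 r ^ 2 + (1 - (1 + sg d) * q r ^ sg d) * g r ^ 2)
    - c * g r ^ 2) ∂(mu d) := by rw [integral_mu]; exact hfin
  have e : ∫ r, ((1 + θ) * (g1 r ^ 2 + (1 - (1 + sg d) * q r ^ sg d) * g r ^ 2)
    - c * g r ^ 2) ∂(mu d) = (1 + θ) * ∫ r, (g1 r ^ 2 + (1 - (1 + sg d) * q r ^ sg d) * g r ^ 2) ∂(mu d)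
      - c * ∫ r, g r ^ 2 ∂(mu d) := by
    rw [← integral_const_mul, ← integral_const_mul]
    exact integral_sub ((i1.add i2).const_mul _) (i0.const_mul _)
  rw [e] at hfin2
  rw [div_mul_eq_mul_div, div_le_iff₀ (by positivity)]
  linarith

end GS

lemma lin3 {d : ℕ} {f g k F : ℝ → ℝ} (a b c : ℝ) (hf : Integrable f (mu d)) (hg : Integrable g (mu d))
    (hk : Integrable k (mu d)) (hF : ∀ r, F r = a * f r - b * g r + c * k r) :
    ∫ r, F r ∂(mu d) = a * ∫ r, f r ∂(mu d) - b * ∫ r, g r ∂(mu d) + c * ∫ r, k r ∂(mu d) := by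
  have e1 : ∫ r, (a * f r - b * g r) ∂(mu d) = ∫ r, a * f r ∂(mu d) - ∫ r, b * g r ∂(mu d) :=
    integral_sub (hf.const_mul a) (hg.const_mul b)
  have e2 : ∫ r, ((a * f r - b * g r) + c * k r) ∂(mu d) =
      ∫ r, (a * f r - b * g r) ∂(mu d) + ∫ r, c * k r ∂(mu d) :=
    integral_add ((hf.const_mul a).sub (hg.const_mul b)) (hk.const_mul c)
  rw [integral_congr_ae (Eventually.of_forall hF), e2, e1, integral_const_mul, integral_const_mul,
    integral_const_mul]

lemma Bexp {d : ℕ} {g g1 n n1 V : ℝ → ℝ} (a : ℝ) (hg : H1 d g g1) (hn : H1 d n n1)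
    (hVg : MemLp (fun r => V r * g r) 2 (mu d)) (hVn : MemLp (fun r => V r * n r) 2 (mu d)) :
    ∫ r, ((g1 r - a * n1 r) ^ 2 + V r * (g r - a * n r) ^ 2) ∂(mu d) =
      ∫ r, (g1 r ^ 2 + V r * g r ^ 2) ∂(mu d) - 2 * a * ∫ r, (g1 r * n1 r + g r * (V r * n r)) ∂(mu d)
      + a ^ 2 * ∫ r, (n1 r * n1 r + n r * (V r * n r)) ∂(mu d) := by
  have iX : Integrable (fun r => g1 r ^ 2 + V r * g r ^ 2) (mu d) := by
    refine ((memLp_mul hg.m1 hg.m1).add (memLp_mul hVg hg.m0)).congr (Eventually.of_forall fun r => ?_)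
    simp only [Pi.add_apply]; ring
  have iY : Integrable (fun r => g1 r * n1 r + g r * (V r * n r)) (mu d) :=
    (memLp_mul hg.m1 hn.m1).add (memLp_mul hg.m0 hVn)
  have iZ : Integrable (fun r => n1 r * n1 r + n r * (V r * n r)) (mu d) :=
    (memLp_mul hn.m1 hn.m1).add (memLp_mul hn.m0 hVn)
  have := lin3 1 (2 * a) (a ^ 2) iX iY iZ
    (F := fun r => (g1 r - a * n1 r) ^ 2 + V r * (g r - a * n r) ^ 2) (fun r => by ring)
  rw [this, one_mul]

lemma H1.sub_mul {d : ℕ} {g g1 n n1 : ℝ → ℝ} (a : ℝ) (hg : H1 d g g1) (hn : H1 d n n1) :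
    H1 d (fun r => g r - a * n r) (fun r => g1 r - a * n1 r) := by
  have := hg.c; have := hn.c
  exact ⟨by fun_prop, fun r hr => (hg.hd r hr).sub ((hn.hd r hr).const_mul a),
    hg.m0.sub (hn.m0.const_mul a), hg.m1.sub (hn.m1.const_mul a)⟩

lemma sq_split {d : ℕ} {g n : ℝ → ℝ} (a : ℝ) (hg : MemLp g 2 (mu d)) (hn : MemLp n 2 (mu d)) :
    ∫ r, g r ^ 2 ∂(mu d) ≤ 2 * ∫ r, (g r - a * n r) ^ 2 ∂(mu d) + 2 * a ^ 2 * ∫ r, n r ^ 2 ∂(mu d) := by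
  have i1 : Integrable (fun r => (g r - a * n r) ^ 2) (mu d) := (hg.sub (hn.const_mul a)).integrable_sq
  rw [← integral_const_mul, ← integral_const_mul,
    ← integral_add (i1.const_mul _) (hn.integrable_sq.const_mul _)]
  refine integral_mono hg.integrable_sq ((i1.const_mul _).add (hn.integrable_sq.const_mul _)) fun r => ?_
  simp only
  nlinarith [sq_nonneg (g r - 2 * a * n r)]

lemma cs {d : ℕ} {k s : ℝ → ℝ} (hk : MemLp k 2 (mu d)) (hs : MemLp s 2 (mu d)) :
    (∫ r, k r * s r ∂(mu d)) ^ 2 ≤ (∫ r, s r ^ 2 ∂(mu d) + 1) * ∫ r, k r ^ 2 ∂(mu d) := by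
  set J := ∫ r, k r * s r ∂(mu d) with hJ
  set S := ∫ r, s r ^ 2 ∂(mu d) with hS
  set K := ∫ r, k r ^ 2 ∂(mu d) with hK
  have hS0 : 0 ≤ S := integral_nonneg fun r => sq_nonneg _
  have h0 : 0 ≤ ∫ r, ((S+1) * k r - J * s r) ^ 2 ∂(mu d) := integral_nonneg fun r => sq_nonneg _
  have e : ∫ r, ((S+1) * k r - J * s r) ^ 2 ∂(mu d) = (S+1)^2 * K - 2 * (S+1) * J * J + J ^ 2 * S := by
    exact lin3 ((S+1)^2) (2 * (S+1) * J) (J ^ 2) hk.integrable_sq (memLp_mul hk hs) hs.integrable_sq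
      (fun r => by ring)
  rw [e] at h0
  have h1 : (S+1) * J^2 ≤ (S+1) * ((S+1) * K) := by nlinarith [sq_nonneg J]
  exact le_of_mul_le_mul_left h1 (by linarith)

namespace GS
variable {d : ℕ} {q q1 : ℝ → ℝ}

lemma memV (h : GS d q q1) (a : ℝ) {f : ℝ → ℝ} (hf : MemLp f 2 (mu d)) :
    MemLp (fun r => (1 - a * q r ^ sg d) * f r) 2 (mu d) := by
  have := hf.sub ((h.memA hf).const_mul a)
  refine this.congr_norm ?_ (Eventually.of_forall fun r => ?_)
  · have := h.cA
    exact (Continuous.aestronglyMeasurable (by fun_prop)).mul hf.1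
  · simp only [Pi.sub_apply]; congr 1; ring

lemma mq (h : GS d q q1) (k : ℕ) : MemLp (fun r => r ^ k * q r) 2 (mu d) := memExp h.cq h.qdec k
lemma mq1 (h : GS d q q1) (k : ℕ) : MemLp (fun r => r ^ k * q1 r) 2 (mu d) := memExp h.c1 h.q1dec k

lemma poho (h : GS d q q1) (j : ℕ) :
    ∫ r, (((d:ℝ) + 1 + j) * (r ^ j * q r ^ 2) + 2 * (r ^ (j+1) * (q r * q1 r))) ∂(mu d) = 0 := by
  have i1 : Integrable (fun r => (((d:ℝ) + 1 + j) * (r ^ j * q r ^ 2) + 2 * (r ^ (j+1) * (q r * q1 r)))) (mu d) := by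
    refine (((memLp_mul (h.mq j) (h.mq 0)).const_mul ((d:ℝ) + 1 + j)).add
      ((memLp_mul (h.mq (j+1)) (h.mq1 0)).const_mul 2)).congr (Eventually.of_forall fun r => ?_)
    simp only [Pi.add_apply]; ring
  have i2 : Integrable (fun r => r ^ (j+1) * q r ^ 2) (mu d) := by
    refine (memLp_mul (h.mq (j+1)) (h.mq 0)).congr (Eventually.of_forall fun r => ?_)
    ring
  have hd : ∀ r ∈ Ioi (0:ℝ), HasDerivAt (fun r => r ^ d * (r ^ (j+1) * q r ^ 2))
      (r ^ d * (((d:ℝ) + 1 + j) * (r ^ j * q r ^ 2) + 2 * (r ^ (j+1) * (q r * q1 r)))) r := by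
    intro r hr
    refine ((hpow d hr).mul ((hpow (j+1) hr).mul ((h.hq r).pow 2))).congr_deriv ?_
    have : r ≠ 0 := ne_of_gt hr
    simp only [Pi.mul_apply, Pi.pow_apply]
    push_cast
    field_simp
    ring
  have hf := integrable_mu.1 i2
  have hf' := integrable_mu.1 i1
  have ht := tendsto_zero_of_hasDerivAt_of_integrableOn_Ioi hd hf' hf
  have := integral_Ioi_of_hasDerivAt_of_tendsto (f := fun r => r ^ d * (r ^ (j+1) * q r ^ 2))
    (by have := h.cq; exact Continuous.continuousWithinAt (by fun_prop)) hd hf' ht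
  rw [integral_mu, this]
  simp

lemma lam0 (h : GS d q q1) : ∫ r, vv d q q1 ((d+1)/2) r * q r ∂(mu d) = 0 := by
  have := h.poho 0
  have e : ∫ r, (((d:ℝ) + 1 + (0:ℕ)) * (r ^ 0 * q r ^ 2) + 2 * (r ^ (0+1) * (q r * q1 r))) ∂(mu d)
      = 2 * ∫ r, vv d q q1 ((d+1)/2) r * q r ∂(mu d) := by
    rw [← integral_const_mul]
    refine integral_congr_ae (Eventually.of_forall fun r => ?_)
    simp only [vv]; push_cast; ring
  rw [e] at this
  linarith

lemma lam2 (h : GS d q q1) : ∫ r, vv d q q1 ((d+1)/2) r * (r ^ 2 * q r) ∂(mu d)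
    = - ∫ r, (r * q r) ^ 2 ∂(mu d) := by
  have := h.poho 2
  have i1 := memLp_mul (h.H1v ((d+1)/2)).m0 (h.mq 2)
  have i2 : Integrable (fun r => (r * q r) ^ 2) (mu d) := by simpa using (h.mq 1).integrable_sq
  have e : ∫ r, (((d:ℝ) + 1 + (2:ℕ)) * (r ^ 2 * q r ^ 2) + 2 * (r ^ (2+1) * (q r * q1 r))) ∂(mu d)
      = 2 * ∫ r, vv d q q1 ((d+1)/2) r * (r ^ 2 * q r) ∂(mu d) + 2 * ∫ r, (r * q r) ^ 2 ∂(mu d) := by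
    rw [← integral_const_mul, ← integral_const_mul, ← integral_add (i1.const_mul _) (i2.const_mul _)]
    refine integral_congr_ae (Eventually.of_forall fun r => ?_)
    simp only [vv]; push_cast; ring
  rw [e] at this
  linarith

lemma Xpos (h : GS d q q1) : 0 < ∫ r, (r * q r) ^ 2 ∂(mu d) := by
  have i2 : Integrable (fun r => (r * q r) ^ 2) (mu d) := by simpa using (h.mq 1).integrable_sq
  rw [integral_mu]
  rw [setIntegral_pos_iff_support_of_nonneg_ae]
  · have : Ioo (0:ℝ) 1 ⊆ (Function.support fun r => r ^ d * (r * q r) ^ 2) ∩ Ioi 0 := by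
      intro r hr
      have h0 : 0 < r := hr.1
      have := h.pos r
      refine ⟨?_, h0⟩
      have : 0 < r ^ d * (r * q r) ^ 2 := by positivity
      exact this.ne'
    refine lt_of_lt_of_le ?_ (measure_mono this)
    simp
  · filter_upwards [ae_restrict_mem measurableSet_Ioi] with r hr
    have : (0:ℝ) < r := hr
    simp only [Pi.zero_apply]
    positivity
  · exact integrable_mu.1 i2

lemma sgmul (d : ℕ) : 2 - sg d * (((d:ℝ)+1)/2) = 0 := by
  unfold sg; field_simp; ring

lemma hLam1 (h : GS d q q1) {r : ℝ} (hr : 0 < r) : HasDerivAt (vv1 d q q1 ((d+1)/2))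
    ((1 - (1 + sg d) * q r ^ sg d) * vv d q q1 ((d+1)/2) r - (-2 * q r)
      - d / r * vv1 d q q1 ((d+1)/2) r) r := by
  refine (h.hvv1 ((d+1)/2) hr).congr_deriv ?_
  rw [sgmul]; ring

section rho
variable {s s1 : ℝ → ℝ}

lemma rhoq (h : GS d q q1) (hs : H1 d s s1) (cs1 : Continuous s1) (zs : s1 0 = 0)
    (hds : ∀ r, 0 < r → HasDerivAt s1 ((1 - (1 + sg d) * q r ^ sg d) * s r - r ^ 2 * q r - d / r * s1 r) r) :
    ∫ r, s r * q r ∂(mu d) = (∫ r, (r * q r) ^ 2 ∂(mu d)) / 2 := by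
  have a1 := ibp (V := fun r => (1 - (1 + sg d) * q r ^ sg d)) (h.H1v ((d+1)/2)) hs.m1 cs1 zs (h.mq 2)
    (h.memV _ hs.m0) hds
  have a2 := ibp (V := fun r => (1 - (1 + sg d) * q r ^ sg d)) (h := fun r => -2 * q r) hs
    (h.H1v ((d+1)/2)).m1 (h.cvv1 _)
    (by simp [vv1, h.z]) (h.H1q.m0.const_mul (-2)) (h.memV _ (h.H1v ((d+1)/2)).m0) (fun r hr => h.hLam1 hr)
  rw [h.lam2] at a1
  have e : ∫ r, s r * (-2 * q r) ∂(mu d) = -2 * ∫ r, s r * q r ∂(mu d) := by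
    rw [← integral_const_mul]
    refine integral_congr_ae (Eventually.of_forall fun r => ?_)
    simp only; ring
  rw [e] at a2
  have e2 : ∫ r, (s1 r * vv1 d q q1 ((d+1)/2) r + s r * ((1 - (1 + sg d) * q r ^ sg d) * vv d q q1 ((d+1)/2) r)) ∂(mu d)
    = ∫ r, (vv1 d q q1 ((d+1)/2) r * s1 r + vv d q q1 ((d+1)/2) r * ((1 - (1 + sg d) * q r ^ sg d) * s r)) ∂(mu d) := by
    refine integral_congr_ae (Eventually.of_forall fun r => ?_)
    simp only; ring
  rw [e2, a1] at a2
  linarith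

lemma plus (h : GS d q q1) (hs : H1 d s s1) (cs1 : Continuous s1) (zs : s1 0 = 0)
    (hds : ∀ r, 0 < r → HasDerivAt s1 ((1 - (1 + sg d) * q r ^ sg d) * s r - r ^ 2 * q r - d / r * s1 r) r) :
    ∃ K M : ℝ, 0 < K ∧ 0 < M ∧ ∀ g g1, H1 d g g1 → ∫ r, g r ^ 2 ∂(mu d) ≤
      K * ∫ r, (g1 r ^ 2 + (1 - (1 + sg d) * q r ^ sg d) * g r ^ 2) ∂(mu d)
      + M * ((∫ r, g r * q r ∂(mu d)) ^ 2 + (∫ r, g r * (r ^ 2 * q r) ∂(mu d)) ^ 2) := by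
  obtain ⟨rs, c, hrs, hc, hco⟩ := h.coerK
  set X := ∫ r, (r * q r) ^ 2 ∂(mu d) with hX
  have hXp : 0 < X := h.Xpos
  have hsq := h.rhoq hs cs1 zs hds
  set Y := ∫ r, s r * (r ^ 2 * q r) ∂(mu d) with hY
  set t := X / (|Y| + 1) with ht
  have htp : 0 < t := by positivity
  set L := vv d q q1 ((d+1)/2) with hL
  set L1 := vv1 d q q1 ((d+1)/2) with hL1
  have HL : H1 d L L1 := h.H1v _
  set n : ℝ → ℝ := fun r => L r - (-t) * s r with hn
  set n1 : ℝ → ℝ := fun r => L1 r - (-t) * s1 r with hn1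
  have Hn : H1 d n n1 := HL.sub_mul (-t) hs
  have cn1 : Continuous n1 := by
    have := h.cvv1 (((d:ℝ)+1)/2)
    simp only [hn1, hL1]; fun_prop
  have zn : n1 0 = 0 := by simp [hn1, hL1, vv1, h.z, zs]
  have hh : MemLp (fun r => -2 * q r + t * (r ^ 2 * q r)) 2 (mu d) :=
    (h.H1q.m0.const_mul (-2)).add ((h.mq 2).const_mul t)
  have hpair : ∀ g g1, H1 d g g1 → ∫ r, (g1 r * n1 r + g r * ((1 - (1 + sg d) * q r ^ sg d) * n r)) ∂(mu d) =
      -2 * ∫ r, g r * q r ∂(mu d) + t * ∫ r, g r * (r ^ 2 * q r) ∂(mu d) := by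
    intro g g1 hg
    have := ibp (n := n) (V := fun r => (1 - (1 + sg d) * q r ^ sg d)) hg Hn.m1 cn1 zn hh (h.memV _ Hn.m0) (by
      intro r hr
      refine ((h.hLam1 hr).sub ((hds r hr).const_mul (-t))).congr_deriv ?_
      simp only [hn, hn1, ← hL, ← hL1]; ring)
    rw [this, ← integral_const_mul, ← integral_const_mul, ← integral_add
      ((memLp_mul hg.m0 h.H1q.m0).const_mul _) ((memLp_mul hg.m0 (h.mq 2)).const_mul _)]
    refine integral_congr_ae (Eventually.of_forall fun r => ?_)
    simp only; ring
  have hlin : ∀ f : ℝ → ℝ, MemLp f 2 (mu d) → ∫ r, n r * f r ∂(mu d) =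
      ∫ r, L r * f r ∂(mu d) + t * ∫ r, s r * f r ∂(mu d) := by
    intro f hf
    rw [← integral_const_mul, ← integral_add (memLp_mul HL.m0 hf) ((memLp_mul hs.m0 hf).const_mul _)]
    refine integral_congr_ae (Eventually.of_forall fun r => ?_)
    simp only [hn]; ring
  have hnn := hpair n n1 Hn
  rw [hlin q h.H1q.m0, hlin _ (h.mq 2), h.lam0, h.lam2, hsq, ← hX, ← hY] at hnn
  set b := - ∫ r, (n1 r * n1 r + n r * ((1 - (1 + sg d) * q r ^ sg d) * n r)) ∂(mu d) with hb
  have hbp : 0 < b := by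
    have a1 : t * Y ≤ X := by
      have : t * (|Y| + 1) = X := by rw [ht]; field_simp
      nlinarith [le_abs_self Y]
    have a2 := mul_pos htp hXp
    rw [hb, hnn]
    nlinarith
  have hnrs : n rs ≠ 0 := by
    intro hz
    have a1 := hco n n1 Hn hz
    have a2 : 0 ≤ c * ∫ r, n r ^ 2 ∂(mu d) := mul_nonneg hc.le (integral_nonneg fun r => sq_nonneg _)
    have a3 : ∫ r, (n1 r ^ 2 + (1 - (1 + sg d) * q r ^ sg d) * n r ^ 2) ∂(mu d) = - b := by
      rw [hb, neg_neg]
      refine integral_congr_ae (Eventually.of_forall fun r => ?_)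
      simp only; ring
    linarith
  set Z := ∫ r, n r ^ 2 ∂(mu d) with hZ
  have hZ0 : 0 ≤ Z := integral_nonneg fun r => sq_nonneg _
  set K := 2 / c + 4 * Z / b with hK
  have hKp : 0 < K := by positivity
  refine ⟨K, K * (2 / b * (8 + 2 * t ^ 2)), hKp, by positivity, ?_⟩
  intro g g1 hg
  set a := g rs / n rs with ha
  have Hk := hg.sub_mul a Hn
  have e1 := hco _ _ Hk (by simp only [ha]; field_simp; ring)
  rw [Bexp (V := fun r => (1 - (1 + sg d) * q r ^ sg d)) a hg Hn (h.memV _ hg.m0) (h.memV _ Hn.m0)] at e1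
  have e2 := sq_split a hg.m0 Hn.m0
  have e3 := hpair g g1 hg
  set U := ∫ r, g r * q r ∂(mu d)
  set W := ∫ r, g r * (r ^ 2 * q r) ∂(mu d)
  set ℓ := ∫ r, (g1 r * n1 r + g r * ((1 - (1 + sg d) * q r ^ sg d) * n r)) ∂(mu d)
  set B := ∫ r, (g1 r ^ 2 + (1 - (1 + sg d) * q r ^ sg d) * g r ^ 2) ∂(mu d)
  set kk := ∫ r, (g r - a * n r) ^ 2 ∂(mu d)
  have hkk : 0 ≤ kk := integral_nonneg fun r => sq_nonneg _
  have e4 : c * kk + a ^ 2 * b / 2 ≤ B + 2 / b * ℓ ^ 2 := by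
    have f1 : c * kk ≤ B - 2 * a * ℓ + a ^ 2 * (-b) := by rw [hb, neg_neg]; exact e1
    have f2 : 0 ≤ (a * b + 2 * ℓ) ^ 2 / (2 * b) := by positivity
    have f3 : (a * b + 2 * ℓ) ^ 2 / (2 * b) = a ^ 2 * b / 2 + 2 * a * ℓ + 2 / b * ℓ ^ 2 := by
      field_simp; ring
    linarith
  have e5 : ℓ ^ 2 ≤ (8 + 2 * t ^ 2) * (U ^ 2 + W ^ 2) := by
    rw [e3]
    have g1 : (-2 * U + t * W) ^ 2 ≤ 2 * (2 * U) ^ 2 + 2 * (t * W) ^ 2 := by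
      nlinarith [sq_nonneg (2 * U + t * W)]
    have g2 : 0 ≤ t ^ 2 * U ^ 2 := by positivity
    nlinarith [sq_nonneg W]
  have e6 : 2 * kk + 2 * a ^ 2 * Z ≤ K * (c * kk + a ^ 2 * b / 2) := by
    have : K * (c * kk + a ^ 2 * b / 2) = 2 * kk + 2 * a ^ 2 * Z + (a ^ 2 * b / c + 4 * Z * c * kk / b) := by
      rw [hK]; field_simp; ring
    rw [this]
    have : 0 ≤ a ^ 2 * b / c + 4 * Z * c * kk / b := by positivity
    linarith
  have e7 := mul_le_mul_of_nonneg_left e4 hKp.le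
  have e8 : K * (2 / b * ℓ ^ 2) ≤ K * (2 / b * ((8 + 2 * t ^ 2) * (U ^ 2 + W ^ 2))) := by gcongr
  linarith

lemma minus (h : GS d q q1) (hs : H1 d s s1) (cs1 : Continuous s1) (zs : s1 0 = 0)
    (hds : ∀ r, 0 < r → HasDerivAt s1 ((1 - (1 + sg d) * q r ^ sg d) * s r - r ^ 2 * q r - d / r * s1 r) r) :
    ∃ K M : ℝ, 0 < K ∧ 0 < M ∧ ∀ g g1, H1 d g g1 → ∫ r, g r ^ 2 ∂(mu d) ≤
      K * ∫ r, (g1 r ^ 2 + (1 - 1 * q r ^ sg d) * g r ^ 2) ∂(mu d)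
      + M * (∫ r, g r * s r ∂(mu d)) ^ 2 := by
  obtain ⟨rs, c, hrs, hc, hco⟩ := h.coerK
  have hy := h.rhoq hs cs1 zs hds
  have hyp := h.Xpos
  set y := ∫ r, s r * q r ∂(mu d) with hydef
  have hy0 : 0 < y := by linarith
  have Hq := h.H1q
  have hpair : ∀ g g1, H1 d g g1 → ∫ r, (g1 r * q1 r + g r * ((1 - 1 * q r ^ sg d) * q r)) ∂(mu d) = 0 := by
    intro g g1 hg
    have := ibp (n := q) (h := fun _ => 0) (V := fun r => (1 - 1 * q r ^ sg d)) hg Hq.m1 h.c1 h.z (MemLp.zero') (h.memV _ Hq.m0) (by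
      intro r hr
      refine (h.hq1 r hr).congr_deriv ?_
      ring)
    rw [this]; simp
  set S := ∫ r, s r ^ 2 ∂(mu d) + 1 with hS
  have hS0 : 0 < S := by
    have : 0 ≤ ∫ r, s r ^ 2 ∂(mu d) := integral_nonneg fun r => sq_nonneg _
    linarith
  set Z := ∫ r, q r ^ 2 ∂(mu d) with hZ
  have hZ0 : 0 ≤ Z := integral_nonneg fun r => sq_nonneg _
  refine ⟨(2 + 4 * S * Z / y ^ 2) / c, 4 * Z / y ^ 2 + 1, by positivity, by positivity, ?_⟩
  intro g g1 hg
  set a := g rs / q rs with ha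
  have Hk := hg.sub_mul a Hq
  have e1 := hco _ _ Hk (by have := (h.pos rs).ne'; simp only [ha]; field_simp; ring)
  have e1' : ∫ r, ((g1 r - a * q1 r) ^ 2 + (1 - (1 + sg d) * q r ^ sg d) * (g r - a * q r) ^ 2) ∂(mu d)
      ≤ ∫ r, ((g1 r - a * q1 r) ^ 2 + (1 - 1 * q r ^ sg d) * (g r - a * q r) ^ 2) ∂(mu d) := by
    have ii : ∀ b : ℝ, Integrable (fun r => ((g1 r - a * q1 r) ^ 2 + (1 - b * q r ^ sg d) * (g r - a * q r) ^ 2)) (mu d) := by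
      intro b
      refine ((memLp_mul Hk.m1 Hk.m1).add (memLp_mul (h.memV b Hk.m0) Hk.m0)).congr (Eventually.of_forall fun r => ?_)
      simp only [Pi.add_apply]; ring
    refine integral_mono (ii _) (ii _) fun r => ?_
    simp only
    have a1 := h.Apos r
    have a2 := sg_pos d
    have : 0 ≤ sg d * q r ^ sg d * (g r - a * q r) ^ 2 := by positivity
    nlinarith
  rw [Bexp (V := fun r => (1 - 1 * q r ^ sg d)) a hg Hq (h.memV _ hg.m0) (h.memV _ Hq.m0),
    hpair g g1 hg, hpair q q1 Hq] at e1'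
  have e2 := sq_split a hg.m0 Hq.m0
  have e3 := cs Hk.m0 hs.m0
  have e4 : ∫ r, (g r - a * q r) * s r ∂(mu d) = ∫ r, g r * s r ∂(mu d) - a * y := by
    rw [hydef, ← integral_const_mul, ← integral_sub (memLp_mul hg.m0 hs.m0) ((memLp_mul hs.m0 Hq.m0).const_mul _)]
    refine integral_congr_ae (Eventually.of_forall fun r => ?_)
    simp only; ring
  rw [e4] at e3
  set T := ∫ r, g r * s r ∂(mu d)
  set B := ∫ r, (g1 r ^ 2 + (1 - 1 * q r ^ sg d) * g r ^ 2) ∂(mu d)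
  set kk := ∫ r, (g r - a * q r) ^ 2 ∂(mu d)
  have hkk : 0 ≤ kk := integral_nonneg fun r => sq_nonneg _
  have e5 : c * kk ≤ B := by linarith
  have e6 : a ^ 2 ≤ (2 * T ^ 2 + 2 * (S * kk)) / y ^ 2 := by
    rw [le_div_iff₀ (by positivity)]
    nlinarith [sq_nonneg (2 * T - a * y)]
  have e7 : 2 * a ^ 2 * Z ≤ 2 * ((2 * T ^ 2 + 2 * (S * kk)) / y ^ 2) * Z := by gcongr
  have e8 : 2 * ((2 * T ^ 2 + 2 * (S * kk)) / y ^ 2) * Z = 4 * Z / y ^ 2 * T ^ 2 + 4 * S * Z / y ^ 2 * kk := by ring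
  have e9 : kk ≤ B / c := by rw [le_div_iff₀ hc]; linarith
  have e10 : (2 + 4 * S * Z / y ^ 2) * kk ≤ (2 + 4 * S * Z / y ^ 2) * (B / c) := by gcongr
  have e11 : (2 + 4 * S * Z / y ^ 2) / c * B = (2 + 4 * S * Z / y ^ 2) * (B / c) := by ring
  rw [e11]
  nlinarith [sq_nonneg T]

end rho

lemma upgrade (h : GS d q q1) {a : ℝ} (ha : 0 ≤ a) {g g1 : ℝ → ℝ} (hg : H1 d g g1) {K M T : ℝ}
    (hb : ∫ r, g r ^ 2 ∂(mu d) ≤ K * ∫ r, (g1 r ^ 2 + (1 - a * q r ^ sg d) * g r ^ 2) ∂(mu d) + M * T) :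
    ∫ r, g r ^ 2 ∂(mu d) + ∫ r, g1 r ^ 2 ∂(mu d) ≤
      (1 + a * q 0 ^ sg d * K) * (∫ r, (g1 r ^ 2 + (1 - a * q r ^ sg d) * g r ^ 2) ∂(mu d))
        + (a * q 0 ^ sg d * M) * T := by
  have iB : Integrable (fun r => (g1 r ^ 2 + (1 - a * q r ^ sg d) * g r ^ 2)) (mu d) := by
    refine ((memLp_mul hg.m1 hg.m1).add (memLp_mul (h.memV a hg.m0) hg.m0)).congr (Eventually.of_forall fun r => ?_)
    simp only [Pi.add_apply]; ring
  have i0 := hg.m0.integrable_sq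
  have i1 := hg.m1.integrable_sq
  have key : ∫ r, g r ^ 2 ∂(mu d) + ∫ r, g1 r ^ 2 ∂(mu d) ≤
      ∫ r, (g1 r ^ 2 + (1 - a * q r ^ sg d) * g r ^ 2) ∂(mu d) + a * q 0 ^ sg d * ∫ r, g r ^ 2 ∂(mu d) := by
    rw [← integral_const_mul, ← integral_add i0 i1, ← integral_add iB (i0.const_mul _)]
    refine integral_mono_ae (i0.add i1) (iB.add (i0.const_mul _)) ?_
    filter_upwards [ae_mu d] with r hr
    have := h.Ale hr.le
    have h2 : a * q r ^ sg d * g r ^ 2 ≤ a * q 0 ^ sg d * g r ^ 2 := by gcongr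
    linarith
  have h3 : 0 ≤ a * q 0 ^ sg d := mul_nonneg ha (h.Apos 0).le
  have := mul_le_mul_of_nonneg_left hb h3
  linarith

end GS

abbrev EE (d : ℕ) := EuclideanSpace ℝ (Fin (d+1))

def e0 (d : ℕ) : EE d := EuclideanSpace.single 0 (1:ℝ)

lemma e0_norm (d : ℕ) : ‖e0 d‖ = 1 := by simp [e0]

def prof {d : ℕ} {F : Type*} (f : EE d → F) (t : ℝ) : F := f (t • e0 d)

def Rad {d : ℕ} {F : Type*} (f : EE d → F) : Prop := ∀ x y, ‖x‖ = ‖y‖ → f x = f y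

lemma Rad.eq {d : ℕ} {F : Type*} {f : EE d → F} (hf : Rad f) (x : EE d) : f x = prof f ‖x‖ :=
  hf _ _ (by rw [norm_smul, e0_norm]; simp)

lemma Rad.even {d : ℕ} {F : Type*} {f : EE d → F} (hf : Rad f) (t : ℝ) : prof f (-t) = prof f t :=
  hf _ _ (by rw [norm_smul, norm_smul]; simp)

lemma Rad.deriv0 {d : ℕ} {f : EE d → ℝ} (hf : Rad f) : deriv (prof f) 0 = 0 := by
  have h : (fun t => prof f (-t)) = prof f := funext hf.even
  have := deriv_comp_neg (prof f) 0
  rw [h, neg_zero] at this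
  linarith

lemma prof_diff {d : ℕ} {f : EE d → ℝ} (hf : Differentiable ℝ f) : Differentiable ℝ (prof f) := by
  unfold prof; fun_prop

lemma norm_hasF {d : ℕ} {x : EE d} (hx : x ≠ 0) :
    HasFDerivAt (fun y : EE d => ‖y‖) (‖x‖⁻¹ • innerSL ℝ x) x := by
  have h1 := (hasStrictFDerivAt_norm_sq x).hasFDerivAt.sqrt (by simpa using hx)
  have : (fun y : EE d => √(‖y‖ ^ 2)) = fun y => ‖y‖ := by
    funext y; exact Real.sqrt_sq (norm_nonneg y)
  rw [this] at h1
  refine h1.congr_fderiv ?_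
  ext v
  rw [Real.sqrt_sq (norm_nonneg x)]
  have : ‖x‖ ≠ 0 := by simpa using hx
  simp
  field_simp

lemma fd_rad {d : ℕ} {f : EE d → ℝ} (hr : Rad f) (hf : Differentiable ℝ f) {x : EE d} (hx : x ≠ 0)
    (i : Fin (d+1)) :
    fderiv ℝ f x (EuclideanSpace.single i (1:ℝ)) = deriv (prof f) ‖x‖ / ‖x‖ * x i := by
  have h1 := ((prof_diff hf) ‖x‖).hasDerivAt.comp_hasFDerivAt x (norm_hasF hx)
  have : (prof f ∘ fun y : EE d => ‖y‖) = f := by funext y; exact (hr.eq y).symm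
  rw [this] at h1
  rw [h1.fderiv]
  simp [EuclideanSpace.inner_single_right]
  ring

lemma grad_rad {d : ℕ} {f : EE d → ℝ} (hr : Rad f) (hf : Differentiable ℝ f) {x : EE d} (hx : x ≠ 0) :
    gradSq f x = (deriv (prof f) ‖x‖) ^ 2 := by
  unfold gradSq
  have : ‖x‖ ≠ 0 := by simpa using hx
  simp only [fd_rad hr hf hx, Real.norm_eq_abs, sq_abs, mul_pow]
  rw [← Finset.mul_sum, ← EuclideanSpace.real_norm_sq_eq]
  field_simp

lemma lapl_rad {d : ℕ} {f : EE d → ℝ} (hr : Rad f) (hf : Differentiable ℝ f) {g2 : ℝ} {x : EE d} (hx : x ≠ 0)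
    (hg : HasDerivAt (deriv (prof f)) g2 ‖x‖) :
    lapl f x = g2 + d / ‖x‖ * deriv (prof f) ‖x‖ := by
  unfold lapl
  have hn : ‖x‖ ≠ 0 := by simpa using hx
  have key : ∀ i : Fin (d+1), fderiv ℝ (fun y => fderiv ℝ f y (EuclideanSpace.single i (1:ℝ))) x
      (EuclideanSpace.single i (1:ℝ)) = (g2 - deriv (prof f) ‖x‖ / ‖x‖) / ‖x‖ ^ 2 * (x i) ^ 2
        + deriv (prof f) ‖x‖ / ‖x‖ := by
    intro i
    have e : (fun y : EE d => fderiv ℝ f y (EuclideanSpace.single i (1:ℝ))) =ᶠ[𝓝 x]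
        fun y => deriv (prof f) ‖y‖ / ‖y‖ * y i := by
      filter_upwards [isOpen_ne.mem_nhds hx] with y hy
      exact fd_rad hr hf hy i
    rw [e.fderiv_eq]
    have h1 : HasDerivAt (fun r => deriv (prof f) r / r) ((g2 * ‖x‖ - deriv (prof f) ‖x‖ * 1) / ‖x‖ ^ 2) ‖x‖ :=
      hg.div (hasDerivAt_id _) hn
    have h2 := h1.comp_hasFDerivAt x (norm_hasF hx)
    have h3 := h2.mul (EuclideanSpace.proj (𝕜 := ℝ) i).hasFDerivAt
    have h4 : HasFDerivAt (fun y : EE d => deriv (prof f) ‖y‖ / ‖y‖ * y i) _ x := h3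
    rw [h4.fderiv]
    simp [EuclideanSpace.inner_single_right]
    field_simp
    ring
  simp only [key]
  rw [Finset.sum_add_distrib, ← Finset.mul_sum, ← EuclideanSpace.real_norm_sq_eq]
  simp
  field_simp
  ring

instance (d : ℕ) : Nontrivial (EE d) := by
  refine ⟨⟨e0 d, 0, fun h => ?_⟩⟩
  have := e0_norm d
  rw [h] at this
  simp at this

def om (d : ℕ) : ℝ := ((d:ℝ) + 1) * (volume : Measure (EE d)).real (Metric.ball 0 1)

lemma om_pos (d : ℕ) : 0 < om d := by
  unfold om
  have : 0 < (volume : Measure (EE d)).real (Metric.ball 0 1) :=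
    ENNReal.toReal_pos (Metric.measure_ball_pos _ _ one_pos).ne' measure_ball_lt_top.ne
  positivity

lemma int_rad (d : ℕ) (h : ℝ → ℝ) : ∫ x : EE d, h ‖x‖ = om d * ∫ r, h r ∂(mu d) := by
  rw [integral_fun_norm_addHaar, integral_mu]
  simp [om, mul_assoc]

lemma intble_rad {d : ℕ} {h : ℝ → ℝ} : Integrable (fun x : EE d => h ‖x‖) ↔ Integrable h (mu d) := by
  rw [integrable_fun_norm_addHaar, integrable_mu]
  simp

lemma int_rad_ae {d : ℕ} {F : EE d → ℝ} {h : ℝ → ℝ} (hF : ∀ x, x ≠ 0 → F x = h ‖x‖) :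
    ∫ x, F x = om d * ∫ r, h r ∂(mu d) := by
  rw [← int_rad]
  refine integral_congr_ae ?_
  filter_upwards [Measure.ae_ne volume (0 : EE d)] with x hx using hF x hx

lemma H1_rad {d : ℕ} {f : EE d → ℝ} (hr : Rad f) (hf : Differentiable ℝ f)
    (i0 : Integrable (fun x => f x ^ 2)) (i1 : Integrable (fun x => gradSq f x)) :
    H1 d (prof f) (deriv (prof f)) := by
  have hc := (prof_diff hf).continuous
  refine ⟨hc, fun r _ => ((prof_diff hf) r).hasDerivAt, ?_, ?_⟩
  · rw [memLp_two_iff_integrable_sq hc.aestronglyMeasurable, ← intble_rad]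
    refine i0.congr (Eventually.of_forall fun x => ?_)
    simp only [hr.eq x]
  · rw [memLp_two_iff_integrable_sq (measurable_deriv _).aestronglyMeasurable, ← intble_rad]
    refine i1.congr ?_
    filter_upwards [Measure.ae_ne volume (0 : EE d)] with x hx
    exact grad_rad hr hf hx

lemma grad_split {d : ℕ} {u : EE d → ℂ} (hu : Differentiable ℝ u) (x : EE d) :
    gradSq u x = gradSq (fun y => (u y).re) x + gradSq (fun y => (u y).im) x := by
  unfold gradSq
  rw [← Finset.sum_add_distrib]
  refine Finset.sum_congr rfl fun i _ => ?_
  have h1 : HasFDerivAt (fun y => (u y).re) (reCLM.comp (fderiv ℝ u x)) x :=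
    reCLM.hasFDerivAt.comp x (hu x).hasFDerivAt
  have h2 : HasFDerivAt (fun y => (u y).im) (imCLM.comp (fderiv ℝ u x)) x :=
    imCLM.hasFDerivAt.comp x (hu x).hasFDerivAt
  rw [h1.fderiv, h2.fderiv, Complex.sq_norm, Complex.normSq_apply]
  simp
  ring

lemma gradSq_nonneg {d : ℕ} {F : Type*} [NormedAddCommGroup F] [NormedSpace ℝ F] (f : EE d → F) (x : EE d) :
    0 ≤ gradSq f x := Finset.sum_nonneg fun i _ => by positivity

lemma gradSq_meas {d : ℕ} (f : EE d → ℝ) : Measurable (gradSq f) := by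
  unfold gradSq
  refine Finset.measurable_fun_sum _ fun i _ => ?_
  exact ((measurable_fderiv_apply_const ℝ f _).norm).pow_const 2

lemma prof_smooth {d : ℕ} {f : EE d → ℝ} (hf : ContDiff ℝ 2 f) :
    ContDiff ℝ 2 (prof f) := by
  unfold prof; fun_prop

lemma prof_c1 {d : ℕ} {f : EE d → ℝ} (hf : ContDiff ℝ 2 f) : Continuous (deriv (prof f)) :=
  (prof_smooth hf).continuous_deriv (by norm_num)

lemma prof_d2 {d : ℕ} {f : EE d → ℝ} (hf : ContDiff ℝ 2 f) (r : ℝ) :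
    HasDerivAt (deriv (prof f)) (deriv (deriv (prof f)) r) r := by
  have h : ContDiff ℝ (1 + 1) (prof f) := by
    have := prof_smooth hf
    norm_num; exact this
  have := ((contDiff_succ_iff_deriv.1 h).2.2).differentiable (by norm_num)
  exact (this r).hasDerivAt

lemma lapl_prof {d : ℕ} {f : EE d → ℝ} (hr : Rad f) (hf : ContDiff ℝ 2 f) {r : ℝ} (h : 0 < r) :
    HasDerivAt (deriv (prof f)) (lapl f (r • e0 d) - d / r * deriv (prof f) r) r := by
  have hn : ‖r • e0 d‖ = r := by rw [norm_smul, e0_norm]; simp [abs_of_pos h]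
  have hx : r • e0 d ≠ 0 := by
    intro h0; rw [h0] at hn; simp at hn; linarith
  have := lapl_rad hr (hf.differentiable (by norm_num)) hx (prof_d2 hf ‖r • e0 d‖)
  rw [hn] at this
  rw [this]
  simpa using prof_d2 hf r

lemma GS_of {d : ℕ} {Q : EE d → ℝ} (hQ : IsGroundState (d+1) Q) : GS d (prof Q) (deriv (prof Q)) := by
  obtain ⟨hs, hp, hr, he, C, c, hC, hc, hd⟩ := hQ
  have h2 : ContDiff ℝ 2 Q := contDiff_infty.1 hs 2
  refine ⟨fun r => hp _, fun r => ((prof_diff (h2.differentiable (by norm_num))) r).hasDerivAt, prof_c1 h2, ?_,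
    Rad.deriv0 hr, C, c, hC, hc, ?_⟩
  · intro r h
    refine (lapl_prof hr h2 h).congr_deriv ?_
    have a1 := he (r • e0 d)
    rw [Real.rpow_add (hp _), Real.rpow_one] at a1
    push_cast at a1
    have : lapl Q (r • e0 d) = prof Q r - prof Q r * prof Q r ^ sg d := by
      unfold sg prof; linarith
    rw [this]
  · intro r h
    have := hd (r • e0 d)
    rw [norm_smul, e0_norm, mul_one, Real.norm_of_nonneg h] at this
    exact this

lemma schwartz_int {d : ℕ} (ρ : SchwartzMap (EE d) ℝ) :
    Integrable (fun x => ρ x ^ 2) ∧ Integrable (fun x => gradSq ρ x) := by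
  refine ⟨(ρ.memLp 2 volume).integrable_sq, ?_⟩
  have h1 := (SchwartzMap.fderivCLM ℝ (EE d) ℝ ρ).memLp 2 volume
  have h2 : Integrable (fun x => ‖SchwartzMap.fderivCLM ℝ (EE d) ℝ ρ x‖ ^ 2) := h1.norm.integrable_sq
  refine Integrable.mono' (h2.const_mul ((d:ℝ)+1)) (gradSq_meas _).aestronglyMeasurable ?_
  refine Eventually.of_forall fun x => ?_
  rw [Real.norm_of_nonneg (gradSq_nonneg _ _)]
  unfold gradSq
  simp only [SchwartzMap.fderivCLM_apply]
  calc _ ≤ ∑ i : Fin (d+1), ‖fderiv ℝ ρ x‖ ^ 2 := by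
        refine Finset.sum_le_sum fun i _ => ?_
        have := (fderiv ℝ ρ x).le_opNorm (EuclideanSpace.single i (1:ℝ))
        simp at this
        gcongr
        exact this
    _ = _ := by simp

lemma fin1 {k m B D ν S : ℝ} (hk : 1 ≤ k) (hm : 0 < m) (hkν : k ≤ ν) (hD : 0 ≤ D) (hS : 0 ≤ S)
    (h : D ≤ k * B + m * S) : 1 / ν * D - m * S ≤ B := by
  have hk0 : 0 < k := by linarith
  have h1 : 1 / ν * D ≤ 1 / k * D := by gcongr
  have h2 : 1 / k * D ≤ 1 / k * (k * B + m * S) := by gcongr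
  have h3 : 1 / k * (k * B + m * S) = B + 1 / k * (m * S) := by field_simp
  have h4 : 1 / k * (m * S) ≤ 1 * (m * S) := by
    gcongr
    rw [div_le_one hk0]; exact hk
  linarith

lemma fin_ineq {ω k1 k2 m1 m2 D1 D2 G1 G2 B1 B2 U W T : ℝ} (hω : 0 < ω) (hk1 : 1 ≤ k1) (hk2 : 1 ≤ k2)
    (hm1 : 0 < m1) (hm2 : 0 < m2) (hD1 : 0 ≤ D1) (hD2 : 0 ≤ D2) (hG1 : 0 ≤ G1) (hG2 : 0 ≤ G2)
    (b1 : D1 + G1 ≤ k1 * B1 + m1 * (U ^ 2 + W ^ 2)) (b2 : D2 + G2 ≤ k2 * B2 + m2 * T ^ 2) :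
    ω * B1 + ω * B2 ≥ 1 / (k1 + k2 + m1 / ω + m2 / ω) * ((ω * D1 + ω * D2) + (ω * G1 + ω * G2))
      - 1 / (1 / (k1 + k2 + m1 / ω + m2 / ω)) * ((ω * U) ^ 2 + (ω * W) ^ 2 + (ω * T) ^ 2) := by
  have hm1ω : 0 < m1 / ω := by positivity
  have hm2ω : 0 < m2 / ω := by positivity
  set ν := k1 + k2 + m1 / ω + m2 / ω with hν
  have f1 := fin1 (ν := ν) hk1 hm1 (by linarith) (by positivity) (by positivity) b1
  have f2 := fin1 (ν := ν) hk2 hm2 (by linarith) (by positivity) (by positivity) b2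
  rw [one_div_one_div]
  have g1 : m1 / ω * (ω ^ 2 * (U ^ 2 + W ^ 2)) ≤ ν * (ω ^ 2 * (U ^ 2 + W ^ 2)) := by
    gcongr; linarith
  have g2 : m2 / ω * (ω ^ 2 * T ^ 2) ≤ ν * (ω ^ 2 * T ^ 2) := by
    gcongr; linarith
  have g3 : m1 / ω * (ω ^ 2 * (U ^ 2 + W ^ 2)) = ω * (m1 * (U ^ 2 + W ^ 2)) := by field_simp
  have g4 : m2 / ω * (ω ^ 2 * T ^ 2) = ω * (m2 * T ^ 2) := by field_simp
  have e1 := mul_le_mul_of_nonneg_left f1 hω.le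
  have e2 := mul_le_mul_of_nonneg_left f2 hω.le
  nlinarith

end aux

/-- coercivity of the linearized operators `L₊, L₋` on radial `H¹` functions:
there is `μ > 0` with
`(L₊ Re u, Re u)₂ + (L₋ Im u, Im u)₂ ≥ μ‖u‖_{H¹}² − (1/μ)((Re u,Q)₂² + (Re u,|x|²Q)₂² + (Im u,ρ)₂²)`. -/
theorem coercivity (N : ℕ) (hN : 1 ≤ N) (Q : EuclideanSpace ℝ (Fin N) → ℝ)
    (hQ : IsGroundState N Q) (ρ : SchwartzMap (EuclideanSpace ℝ (Fin N)) ℝ)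
    (hρrad : ∀ x y, ‖x‖ = ‖y‖ → ρ x = ρ y)
    (hρ : ∀ x, -lapl (⇑ρ) x + ρ x - (1 + 4 / N) * Q x ^ ((4:ℝ) / N) * ρ x = ‖x‖ ^ 2 * Q x) :
    ∃ μ : ℝ, 0 < μ ∧ ∀ u : EuclideanSpace ℝ (Fin N) → ℂ,
      (∀ x y, ‖x‖ = ‖y‖ → u x = u y) →
      Differentiable ℝ u →
      Integrable (fun x => ‖u x‖ ^ 2) →
      Integrable (fun x => gradSq u x) →
      (∫ x, (gradSq (fun y => (u y).re) x + (u x).re ^ 2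
            - (1 + 4 / N) * Q x ^ ((4:ℝ) / N) * (u x).re ^ 2)) +
        (∫ x, (gradSq (fun y => (u y).im) x + (u x).im ^ 2
            - Q x ^ ((4:ℝ) / N) * (u x).im ^ 2))
      ≥ μ * ((∫ x, ‖u x‖ ^ 2) + ∫ x, gradSq u x)
        - (1 / μ) * ((∫ x, (u x).re * Q x) ^ 2 + (∫ x, (u x).re * (‖x‖ ^ 2 * Q x)) ^ 2
            + (∫ x, (u x).im * ρ x) ^ 2) := by
  obtain ⟨d, rfl⟩ : ∃ d, N = d + 1 := ⟨N - 1, by omega⟩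
  have G := GS_of hQ
  have hQr : Rad Q := hQ.2.2.1
  have hρr : Rad (⇑ρ) := hρrad
  have hρ2 : ContDiff ℝ 2 ρ := ρ.smooth 2
  have hcast : (4:ℝ) / ((d + 1 : ℕ) : ℝ) = sg d := by unfold sg; push_cast; rfl
  have hs : H1 d (prof ρ) (deriv (prof ρ)) :=
    H1_rad hρr ρ.differentiable (schwartz_int ρ).1 (schwartz_int ρ).2
  have hds : ∀ r, 0 < r → HasDerivAt (deriv (prof ρ)) ((1 - (1 + sg d) * prof Q r ^ sg d) * prof ρ r
      - r ^ 2 * prof Q r - d / r * deriv (prof ρ) r) r := by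
    intro r hr
    refine (lapl_prof hρr hρ2 hr).congr_deriv ?_
    have a1 := hρ (r • e0 d)
    rw [hcast, norm_smul, e0_norm, mul_one, Real.norm_of_nonneg hr.le] at a1
    have : lapl ρ (r • e0 d) = (1 - (1 + sg d) * prof Q r ^ sg d) * prof ρ r - r ^ 2 * prof Q r := by
      unfold prof; linarith
    rw [this]
  obtain ⟨K1, M1, hK1, hM1, H1p⟩ := G.plus hs (prof_c1 hρ2) (Rad.deriv0 hρr) hds
  obtain ⟨K2, M2, hK2, hM2, H1m⟩ := G.minus hs (prof_c1 hρ2) (Rad.deriv0 hρr) hds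
  have hω := om_pos d
  set ω := om d with hωd
  set A0 := prof Q 0 ^ sg d with hA0
  have hA0p : 0 < A0 := G.Apos 0
  have hsg := sg_pos d
  set a := 1 + sg d with ha
  have hap : 0 < a := by positivity
  set k1 := 1 + a * A0 * K1
  set k2 := 1 + 1 * A0 * K2
  set m1 := a * A0 * M1
  set m2 := 1 * A0 * M2
  have hk1 : 1 ≤ k1 := by have : 0 < a * A0 * K1 := by positivity
                          linarith
  have hk2 : 1 ≤ k2 := by have : 0 < 1 * A0 * K2 := by positivity
                          linarith
  have hm1 : 0 < m1 := by positivity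
  have hm2 : 0 < m2 := by positivity
  set ν := k1 + k2 + m1 / ω + m2 / ω with hν
  have hm1ω : 0 < m1 / ω := by positivity
  have hm2ω : 0 < m2 / ω := by positivity
  have hνp : 0 < ν := by linarith
  refine ⟨1 / ν, by positivity, ?_⟩
  intro u hur hud hu0 hu1
  have hre : Rad (fun y => (u y).re) := fun x y h => by simp only [hur x y h]
  have him : Rad (fun y => (u y).im) := fun x y h => by simp only [hur x y h]
  have dre : Differentiable ℝ (fun y => (u y).re) := fun x => reCLM.differentiableAt.comp x (hud x)
  have dim : Differentiable ℝ (fun y => (u y).im) := fun x => imCLM.differentiableAt.comp x (hud x)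
  have nsq : ∀ x, ‖u x‖ ^ 2 = (u x).re ^ 2 + (u x).im ^ 2 := fun x => by
    rw [Complex.sq_norm, Complex.normSq_apply]; ring
  have ire : Integrable (fun x => (u x).re ^ 2) := by
    refine hu0.mono' (dre.continuous.pow 2).aestronglyMeasurable (Eventually.of_forall fun x => ?_)
    rw [Real.norm_of_nonneg (sq_nonneg _), nsq]
    linarith [sq_nonneg (u x).im]
  have iim : Integrable (fun x => (u x).im ^ 2) := by
    refine hu0.mono' (dim.continuous.pow 2).aestronglyMeasurable (Eventually.of_forall fun x => ?_)
    rw [Real.norm_of_nonneg (sq_nonneg _), nsq]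
    linarith [sq_nonneg (u x).re]
  have gre : Integrable (fun x => gradSq (fun y => (u y).re) x) := by
    refine hu1.mono' (gradSq_meas _).aestronglyMeasurable (Eventually.of_forall fun x => ?_)
    rw [Real.norm_of_nonneg (gradSq_nonneg _ _), grad_split hud]
    linarith [gradSq_nonneg (fun y => (u y).im) x]
  have gim : Integrable (fun x => gradSq (fun y => (u y).im) x) := by
    refine hu1.mono' (gradSq_meas _).aestronglyMeasurable (Eventually.of_forall fun x => ?_)
    rw [Real.norm_of_nonneg (gradSq_nonneg _ _), grad_split hud]
    linarith [gradSq_nonneg (fun y => (u y).re) x]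
  have Hre := H1_rad hre dre ire gre
  have Him := H1_rad him dim iim gim
  have b1 := G.upgrade hap.le Hre (H1p _ _ Hre)
  have b2 := G.upgrade zero_le_one Him (H1m _ _ Him)
  set g := prof (fun y => (u y).re)
  set p := prof (fun y => (u y).im)
  have eg : ∀ x, (u x).re = g ‖x‖ := fun x => hre.eq x
  have ep : ∀ x, (u x).im = p ‖x‖ := fun x => him.eq x
  have c1 : ∫ x, ‖u x‖ ^ 2 = ω * (∫ r, g r ^ 2 ∂(mu d)) + ω * ∫ r, p r ^ 2 ∂(mu d) := by
    simp only [nsq]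
    rw [integral_add ire iim]
    congr 1
    · exact int_rad_ae fun x _ => by rw [eg]
    · exact int_rad_ae fun x _ => by rw [ep]
  have c2 : ∫ x, gradSq u x = ω * (∫ r, deriv g r ^ 2 ∂(mu d)) + ω * ∫ r, deriv p r ^ 2 ∂(mu d) := by
    simp only [grad_split hud]
    rw [integral_add gre gim]
    congr 1
    · exact int_rad_ae fun x hx => grad_rad hre dre hx
    · exact int_rad_ae fun x hx => grad_rad him dim hx
  have c3 : ∫ x, (gradSq (fun y => (u y).re) x + (u x).re ^ 2
            - (1 + 4 / ((d + 1 : ℕ) : ℝ)) * Q x ^ ((4:ℝ) / ((d + 1 : ℕ) : ℝ)) * (u x).re ^ 2) =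
      ω * ∫ r, (deriv g r ^ 2 + (1 - a * prof Q r ^ sg d) * g r ^ 2) ∂(mu d) := by
    rw [hcast]
    refine int_rad_ae fun x hx => ?_
    rw [grad_rad hre dre hx, eg, hQr.eq x]
    ring
  have c4 : ∫ x, (gradSq (fun y => (u y).im) x + (u x).im ^ 2
            - Q x ^ ((4:ℝ) / ((d + 1 : ℕ) : ℝ)) * (u x).im ^ 2) =
      ω * ∫ r, (deriv p r ^ 2 + (1 - 1 * prof Q r ^ sg d) * p r ^ 2) ∂(mu d) := by
    rw [hcast]
    refine int_rad_ae fun x hx => ?_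
    rw [grad_rad him dim hx, ep, hQr.eq x]
    ring
  have c5 : ∫ x, (u x).re * Q x = ω * ∫ r, g r * prof Q r ∂(mu d) :=
    int_rad_ae fun x _ => by rw [eg, hQr.eq x]
  have c6 : ∫ x, (u x).re * (‖x‖ ^ 2 * Q x) = ω * ∫ r, g r * (r ^ 2 * prof Q r) ∂(mu d) :=
    int_rad_ae fun x _ => by rw [eg, hQr.eq x]
  have c7 : ∫ x, (u x).im * ρ x = ω * ∫ r, p r * prof ρ r ∂(mu d) :=
    int_rad_ae fun x _ => by rw [ep, hρr.eq x]
  rw [c1, c2, c3, c4, c5, c6, c7]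
  exact fin_ineq hω hk1 hk2 hm1 hm2 (integral_nonneg fun r => sq_nonneg _) (integral_nonneg fun r => sq_nonneg _)
    (integral_nonneg fun r => sq_nonneg _) (integral_nonneg fun r => sq_nonneg _) b1 b2
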